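/- arXiv:1403.5335 — 3 statements merged into one kernel-verified Lean document; each statement's English description precedes it below -/
import Mathlib

section
/- For every ε > 0 there is a constant C_ε such that the following holds: for every finite set Λ of distinct points on the truncated paraboloid P² = {(ξ₁, ξ₂, ξ₁² + ξ₂²) : |ξ₁|, |ξ₂| ≤ 1/2} ⊂ ℝ³ there exists R₀ = R₀(Λ) such that for every R ≥ R₀, every Euclidean ball B_R ⊂ ℝ³ of radius R, and every a : Λ → ℂ, one has ( (1/|B_R|) ∫_{B_R} |Σ_{ξ ∈ Λ} a_ξ e(ξ·x)|⁴ dx )^{1/4} ≤ C_ε · |Λ|^{ε} · (Σ_{ξ ∈ Λ} |a_ξ|²)^{1/2}. -/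
open MeasureTheory Real
open scoped RealInnerProductSpace

noncomputable section

/-- `e(t) = e^{2πit}`. -/
def ee (t : ℝ) : ℂ := Complex.exp (2 * Real.pi * Complex.I * t)

/-- The truncated elliptic paraboloid `P² ⊂ ℝ³`. -/
def parab2 : Set (EuclideanSpace ℝ (Fin 3)) :=
  {x | |x 0| ≤ 1 / 2 ∧ |x 1| ≤ 1 / 2 ∧ x 2 = (x 0) ^ 2 + (x 1) ^ 2}


set_option linter.unusedSectionVars false

section planar

variable {α : Type*} (x y : α → ℝ)

/-- slope of the line through the two ends of `e` -/
def sl (e : α × α) : ℝ := (y e.2 - y e.1) / (x e.2 - x e.1)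

/-- intercept -/
def ic (e : α × α) : ℝ := y e.1 - sl x y e * x e.1

/-- vertical deviation of `p` from the line of `e` -/
def dv (e : α × α) (p : α) : ℝ := y p - (sl x y e * x p + ic x y e)

/-- two edges cross -/
def crs (e f : α × α) : Prop :=
  dv x y e f.1 * dv x y e f.2 < 0 ∧ dv x y f e.1 * dv x y f e.2 < 0

lemma on_fst (e : α × α) : y e.1 = sl x y e * x e.1 + ic x y e := by
  simp [ic]

lemma on_snd (e : α × α) (h : x e.1 < x e.2) : y e.2 = sl x y e * x e.2 + ic x y e := by
  have h' : x e.2 - x e.1 ≠ 0 := (sub_pos.2 h).ne'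
  have : sl x y e * (x e.2 - x e.1) = y e.2 - y e.1 := by
    unfold sl; field_simp
  simp only [ic]; linarith

lemma cross_of {e f : α × α} (he : x e.1 < x e.2) (hf : x f.1 < x f.2) {s t : ℝ} (hst : s < t)
    (h1 : x e.1 ≤ s) (h2 : x f.1 ≤ s) (h3 : t ≤ x e.2) (h4 : t ≤ x f.2)
    (hs : sl x y f * s + ic x y f < sl x y e * s + ic x y e)
    (ht : sl x y e * t + ic x y e < sl x y f * t + ic x y f) : crs x y e f := by
  have e1 := on_fst x y e
  have e2 := on_snd x y e he
  have f1 := on_fst x y f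
  have f2 := on_snd x y f hf
  unfold crs dv
  rw [e1, e2, f1, f2]
  generalize sl x y e = m at *
  generalize sl x y f = n at *
  generalize ic x y e = c at *
  generalize ic x y f = d at *
  have hmn : m < n := by
    by_contra h
    push Not at h
    nlinarith
  constructor
  · apply mul_neg_of_neg_of_pos <;> nlinarith
  · apply mul_neg_of_pos_of_neg <;> nlinarith

/-- `f` is the next edge above `e`, and `w` is the first vertex in the wedge -/
def Wedge (S : Finset α) (E : Finset (α × α)) (e f : α × α) (w : α) : Prop :=
  e ∈ E ∧ f ∈ E ∧ f.1 = e.1 ∧ sl x y e < sl x y f ∧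
  (∀ g ∈ E, g.1 = e.1 → sl x y e < sl x y g → sl x y f ≤ sl x y g) ∧
  w ∈ S ∧ x e.1 < x w ∧ 0 ≤ dv x y e w ∧ dv x y f w ≤ 0 ∧
  (∀ p ∈ S, x e.1 < x p → 0 ≤ dv x y e p → dv x y f p ≤ 0 → x w ≤ x p)

/-- A good edge set. -/
def GoodE (S : Finset α) (E : Finset (α × α)) : Prop :=
  ∀ e ∈ E, e.1 ∈ S ∧ e.2 ∈ S ∧ x e.1 < x e.2 ∧
    ∀ w ∈ S, x e.1 < x w → x w < x e.2 → dv x y e w ≠ 0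

variable {x y}

lemma edge_eq (hx : Function.Injective x) {S : Finset α} {E : Finset (α × α)}
    (hE : GoodE x y S E) {e f : α × α} (he : e ∈ E) (hf : f ∈ E) (h1 : e.1 = f.1)
    (h2 : sl x y e = sl x y f) : e = f := by
  obtain ⟨a1, a2, a3, a4⟩ := hE e he
  obtain ⟨b1, b2, b3, b4⟩ := hE f hf
  have hic : ic x y e = ic x y f := by simp [ic, h1, h2]
  have e2 := on_snd x y e a3
  have f2 := on_snd x y f b3
  rcases lt_trichotomy (x e.2) (x f.2) with h | h | h
  · exact absurd (by unfold dv; rw [e2, h2, hic]; ring) (b4 e.2 a2 (h1 ▸ a3) h)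
  · exact Prod.ext h1 (hx h)
  · exact absurd (by unfold dv; rw [f2, h2, hic]; ring) (a4 f.2 b2 (h1 ▸ b3) h)

lemma wedge_le {S : Finset α} {E : Finset (α × α)}
    (hE : GoodE x y S E) {e f : α × α} {w : α} (h : Wedge x y S E e f w) :
    x w ≤ x e.2 ∧ x w ≤ x f.2 := by
  obtain ⟨he, hf, h1, h2, h3, h4, h5, h6, h7, h8⟩ := h
  obtain ⟨a1, a2, a3, a4⟩ := hE e he
  obtain ⟨b1, b2, b3, b4⟩ := hE f hf
  have e2 := on_snd x y e a3
  have f2 := on_snd x y f b3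
  have e1 := on_fst x y e
  have f1 := on_fst x y f
  rw [h1] at f1 b3
  constructor
  · apply h8 _ a2 a3
    · unfold dv; rw [e2]; simp
    · unfold dv; rw [e2]; nlinarith
  · apply h8 _ b2 b3
    · unfold dv; rw [f2]; nlinarith
    · unfold dv; rw [f2]; simp

/-- two wedges with different apexes cannot share a first vertex of the same type. -/
lemma wedge_apex {S : Finset α} {E : Finset (α × α)}
    (hE : GoodE x y S E) (nc : ∀ e ∈ E, ∀ f ∈ E, ¬ crs x y e f)
    {e f e' f' : α × α} {w : α} (h : Wedge x y S E e f w) (h' : Wedge x y S E e' f' w)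
    (ht : (dv x y f w < 0 ∧ dv x y f' w < 0) ∨ (dv x y f w = 0 ∧ dv x y f' w = 0))
    (hlt : x e.1 < x e'.1) : False := by
  obtain ⟨l1, l2⟩ := wedge_le hE h
  obtain ⟨l1', l2'⟩ := wedge_le hE h'
  obtain ⟨he, hf, h1, h2, h3, h4, h5, h6, h7, h8⟩ := h
  obtain ⟨he', hf', h1', h2', h3', h4', h5', h6', h7', h8'⟩ := h'
  have a3 := (hE e he).2.2.1
  have b3 := (hE f hf).2.2.1
  have a3' := (hE e' he').2.2.1
  have b3' := (hE f' hf').2.2.1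
  have e1 := on_fst x y e
  have f1 := on_fst x y f
  have e1' := on_fst x y e'
  have f1' := on_fst x y f'
  rw [h1] at f1
  rw [h1'] at f1'
  have key : dv x y e e'.1 < 0 ∨ 0 < dv x y f e'.1 := by
    by_contra hcon
    push Not at hcon
    have := h8 e'.1 (hE e' he').1 hlt hcon.1 hcon.2
    linarith
  unfold dv at *
  rcases key with hk | hk
  · refine nc e he f' hf' (cross_of x y a3 b3' h5' hlt.le (by rw [h1']) l1 l2' (by linarith) ?_)
    rcases ht with ⟨t1, t2⟩ | ⟨t1, t2⟩
    · linarith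
    ·
      nlinarith
  · refine nc e' he' f hf (cross_of x y a3' b3 h5' le_rfl (by rw [h1]; exact hlt.le) l1' l2
      (by linarith) ?_)
    rcases ht with ⟨t1, t2⟩ | ⟨t1, t2⟩
    · linarith
    · nlinarith

lemma wedge_inj (hx : Function.Injective x) {S : Finset α} {E : Finset (α × α)}
    (hE : GoodE x y S E) (nc : ∀ e ∈ E, ∀ f ∈ E, ¬ crs x y e f)
    {e f e' f' : α × α} {w : α} (h : Wedge x y S E e f w) (h' : Wedge x y S E e' f' w)
    (ht : (dv x y f w < 0 ∧ dv x y f' w < 0) ∨ (dv x y f w = 0 ∧ dv x y f' w = 0)) :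
    e = e' := by
  have hap : e.1 = e'.1 := by
    apply hx
    apply le_antisymm
    · by_contra hc
      exact wedge_apex hE nc h' h (by tauto) (not_le.1 hc)
    · by_contra hc
      exact wedge_apex hE nc h h' ht (not_le.1 hc)
  obtain ⟨he, hf, h1, h2, h3, h4, h5, h6, h7, h8⟩ := h
  obtain ⟨he', hf', h1', h2', h3', h4', h5', h6', h7', h8'⟩ := h'
  apply edge_eq hx hE he he' hap
  have e1 := on_fst x y e
  have f1 := on_fst x y f
  have e1' := on_fst x y e'
  have f1' := on_fst x y f'
  rw [h1] at f1
  rw [h1', ← hap] at f1'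
  rw [← hap] at e1'
  unfold dv at *
  rcases lt_trichotomy (sl x y e) (sl x y e') with hh | hh | hh
  · have := h3 e' he' hap.symm hh
    exfalso
    rcases ht with ⟨t1, t2⟩ | ⟨t1, t2⟩ <;> nlinarith
  · exact hh
  · have := h3' e he hap hh
    exfalso
    rcases ht with ⟨t1, t2⟩ | ⟨t1, t2⟩ <;> nlinarith

theorem planar (hx : Function.Injective x) {S : Finset α} {E : Finset (α × α)}
    (hE : GoodE x y S E) (nc : ∀ e ∈ E, ∀ f ∈ E, ¬ crs x y e f) :
    E.card ≤ 3 * S.card := by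
  classical
  set T := E.filter (fun e => ∀ f ∈ E, f.1 = e.1 → sl x y f ≤ sl x y e) with hT
  set N := E.filter (fun e => ¬ ∀ f ∈ E, f.1 = e.1 → sl x y f ≤ sl x y e) with hN
  have hc : T.card + N.card = E.card := Finset.card_filter_add_card_filter_not _
  have hTc : T.card ≤ S.card := by
    apply Finset.card_le_card_of_injOn (fun e => e.1)
    · intro e he
      exact (hE e (Finset.mem_filter.1 he).1).1
    · intro e he f hf hef
      have he := Finset.mem_filter.1 he
      have hf := Finset.mem_filter.1 hf
      exact edge_eq hx hE he.1 hf.1 hef (le_antisymm (hf.2 _ he.1 hef) (he.2 _ hf.1 hef.symm))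
  have ex : ∀ e, ∃ fw : (α × α) × α, e ∈ N → Wedge x y S E e fw.1 fw.2 := by
    intro e
    by_cases he : e ∈ N
    swap
    · exact ⟨(e, e.1), fun h => absurd h he⟩
    obtain ⟨he, hh⟩ := Finset.mem_filter.1 he
    push Not at hh
    obtain ⟨f0, hf0, h01, h02⟩ := hh
    obtain ⟨f, hf, hmin⟩ := Finset.exists_min_image
      (E.filter (fun f => f.1 = e.1 ∧ sl x y e < sl x y f)) (fun f => sl x y f)
      ⟨f0, by simp [hf0, h01, h02]⟩
    obtain ⟨hf, hf1, hf2⟩ := Finset.mem_filter.1 hf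
    have a3 := (hE e he).2.2.1
    obtain ⟨w, hw, hwm⟩ := Finset.exists_min_image
      (S.filter (fun p => x e.1 < x p ∧ 0 ≤ dv x y e p ∧ dv x y f p ≤ 0)) (fun f => x f)
      ⟨e.2, by
        have e2 := on_snd x y e a3
        have e1 := on_fst x y e
        have f1 := on_fst x y f
        rw [hf1] at f1
        refine Finset.mem_filter.2 ⟨(hE e he).2.1, a3, ?_, ?_⟩
        · unfold dv; rw [e2]; simp
        · unfold dv; rw [e2]; nlinarith⟩
    obtain ⟨hw, w1, w2, w3⟩ := Finset.mem_filter.1 hw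
    refine ⟨(f, w), fun _ => ⟨he, hf, hf1, hf2, ?_, hw, w1, w2, w3, ?_⟩⟩
    · intro g hg g1 g2
      exact hmin g (Finset.mem_filter.2 ⟨hg, g1, g2⟩)
    · intro p hp p1 p2 p3
      exact hwm p (Finset.mem_filter.2 ⟨hp, p1, p2, p3⟩)
  choose F hF using ex
  set N1 := N.filter (fun e => dv x y (F e).1 (F e).2 < 0)
  set N2 := N.filter (fun e => ¬ dv x y (F e).1 (F e).2 < 0)
  have hc2 : N1.card + N2.card = N.card := Finset.card_filter_add_card_filter_not _
  have h1 : N1.card ≤ S.card := by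
    apply Finset.card_le_card_of_injOn (fun e => (F e).2)
    · intro e he
      exact (hF e (Finset.mem_filter.1 he).1).2.2.2.2.2.1
    · intro e he f hf hef
      have he := Finset.mem_filter.1 he
      have hf := Finset.mem_filter.1 hf
      have hwf := hF f hf.1
      simp only at hef
      have hf2 := hf.2
      rw [← hef] at hwf hf2
      exact wedge_inj hx hE nc (hF e he.1) hwf (Or.inl ⟨he.2, hf2⟩)
  have h2 : N2.card ≤ S.card := by
    apply Finset.card_le_card_of_injOn (fun e => (F e).2)
    · intro e he
      exact (hF e (Finset.mem_filter.1 he).1).2.2.2.2.2.1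
    · intro e he f hf hef
      have he := Finset.mem_filter.1 he
      have hf := Finset.mem_filter.1 hf
      have hwf := hF f hf.1
      have hwe := hF e he.1
      have q1 := hwe.2.2.2.2.2.2.2.2.1
      have q2 := hwf.2.2.2.2.2.2.2.2.1
      simp only at hef
      have hf2 := hf.2
      rw [← hef] at hwf hf2 q2
      exact wedge_inj hx hE nc (hF e he.1) hwf
        (Or.inr ⟨le_antisymm q1 (not_lt.1 he.2), le_antisymm q2 (not_lt.1 hf2)⟩)
  omega

end planar
section crossing

variable {α : Type*} {x y : α → ℝ}

lemma GoodE.mono {S S' : Finset α} {E E' : Finset (α × α)} (h : GoodE x y S E)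
    (hS : S' ⊆ S) (hE : E' ⊆ E) (hm : ∀ e ∈ E', e.1 ∈ S' ∧ e.2 ∈ S') : GoodE x y S' E' := by
  intro e he
  obtain ⟨a1, a2, a3, a4⟩ := h e (hE he)
  exact ⟨(hm e he).1, (hm e he).2, a3, fun w hw => a4 w (hS hw)⟩

open Classical in
theorem cr_ge (hx : Function.Injective x) {S : Finset α} (E : Finset (α × α))
    (hE : GoodE x y S E) :
    E.card ≤ 3 * S.card + ((E ×ˢ E).filter (fun p => crs x y p.1 p.2)).card := by
  induction E using Finset.strongInduction with
  | H E ih =>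
    by_cases nc : ∀ e ∈ E, ∀ f ∈ E, ¬ crs x y e f
    · have := planar hx hE nc
      omega
    · push Not at nc
      obtain ⟨e, he, f, hf, hef⟩ := nc
      have h1 := ih (E.erase e) (Finset.erase_ssubset he)
        (hE.mono subset_rfl (Finset.erase_subset _ _) (fun g hg =>
          ⟨(hE g (Finset.erase_subset _ _ hg)).1, (hE g (Finset.erase_subset _ _ hg)).2.1⟩))
      have h2 : (((E.erase e) ×ˢ (E.erase e)).filter (fun p => crs x y p.1 p.2)).card <
          ((E ×ˢ E).filter (fun p => crs x y p.1 p.2)).card := by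
        apply Finset.card_lt_card
        rw [Finset.ssubset_iff_of_subset]
        · refine ⟨(e, f), ?_, ?_⟩
          · simp [he, hf, hef]
          · simp
        · apply Finset.filter_subset_filter
          apply Finset.product_subset_product <;> exact Finset.erase_subset _ _
      have h3 := Finset.card_erase_add_one he
      omega

lemma count_col [Fintype α] [DecidableEq α] (k : ℕ) (T : Finset α) :
    (Finset.univ.filter (fun χ : α → Fin (k+1) => ∀ i ∈ T, χ i = 0)).card * (k+1) ^ T.card
      = (k+1) ^ (Fintype.card α) := by
  have : (Finset.univ.filter (fun χ : α → Fin (k+1) => ∀ i ∈ T, χ i = 0)) =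
      Fintype.piFinset (fun i => if i ∈ T then {0} else Finset.univ) := by
    ext χ
    simp only [Finset.mem_filter, Finset.mem_univ, true_and, Fintype.mem_piFinset]
    apply forall_congr'
    intro i
    by_cases h : i ∈ T <;> simp [h]
  rw [this, Fintype.card_piFinset]
  have h2 : ∀ i, (if i ∈ T then ({0} : Finset (Fin (k+1))) else Finset.univ).card =
      if i ∈ T then 1 else (k+1) := by
    intro i; by_cases h : i ∈ T <;> simp [h]
  simp_rw [h2]
  have h3 : (k+1) ^ T.card = ∏ i, (if i ∈ T then (k+1) else 1) := by
    simp [Finset.prod_ite_mem]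
  rw [h3, ← Finset.prod_mul_distrib]
  have : ∀ i, (if i ∈ T then 1 else (k+1)) * (if i ∈ T then (k+1) else 1) = k+1 := by
    intro i; by_cases h : i ∈ T <;> simp [h]
  simp [this]

lemma count_sum [Fintype α] [DecidableEq α] {β : Type*} (k t : ℕ) (B : Finset β)
    (T : β → Finset α) (hT : ∀ b ∈ B, (T b).card = t) :
    (∑ χ : α → Fin (k+1), (B.filter (fun b => ∀ i ∈ T b, χ i = 0)).card) * (k+1)^t =
      B.card * (k+1) ^ (Fintype.card α) := by
  simp_rw [Finset.card_filter]
  rw [Finset.sum_comm, Finset.sum_mul, Finset.card_eq_sum_ones, Finset.sum_mul]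
  apply Finset.sum_congr rfl
  intro b hb
  rw [← Finset.card_filter, ← hT b hb, count_col, one_mul]

lemma crs_ne {e f : α × α} (he : x e.1 < x e.2) (h : crs x y e f) :
    e.1 ≠ f.1 ∧ e.1 ≠ f.2 ∧ e.2 ≠ f.1 ∧ e.2 ≠ f.2 := by
  have h1 : dv x y e e.1 = 0 := by unfold dv; rw [← on_fst]; simp
  have h2 : dv x y e e.2 = 0 := by unfold dv; rw [← on_snd x y e he]; simp
  have h3 := h.1
  refine ⟨?_, ?_, ?_, ?_⟩ <;> intro h' <;> simp [← h', h1, h2] at h3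

open Classical in
theorem sampling [Fintype α] (hx : Function.Injective x) (E : Finset (α × α))
    (hE : GoodE x y Finset.univ E) (k : ℕ) :
    E.card * (k+1)^2 ≤ 3 * Fintype.card α * (k+1)^3 +
      ((E ×ˢ E).filter (fun p => crs x y p.1 p.2)).card := by
  set X := ((E ×ˢ E).filter (fun p => crs x y p.1 p.2)) with hX
  have key : ∀ χ : α → Fin (k+1),
      (E.filter (fun b => ∀ i ∈ ({b.1, b.2} : Finset α), χ i = 0)).card ≤
      3 * ((Finset.univ : Finset α).filter (fun b => ∀ i ∈ ({b} : Finset α), χ i = 0)).card +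
      (X.filter (fun b => ∀ i ∈ ({b.1.1, b.1.2, b.2.1, b.2.2} : Finset α), χ i = 0)).card := by
    intro χ
    have := cr_ge (S := ((Finset.univ : Finset α).filter
      (fun b => ∀ i ∈ ({b} : Finset α), χ i = 0))) hx
      (E.filter (fun b => ∀ i ∈ ({b.1, b.2} : Finset α), χ i = 0))
      (hE.mono (Finset.filter_subset _ _) (Finset.filter_subset _ _) (by
        intro e he
        have := (Finset.mem_filter.1 he).2
        simp at this
        simp [this]))
    refine this.trans ?_
    gcongr
    intro p hp
    simp only [Finset.mem_filter, Finset.mem_product, hX] at hp ⊢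
    refine ⟨⟨⟨hp.1.1.1, hp.1.2.1⟩, hp.2⟩, ?_⟩
    have h1 := hp.1.1.2
    have h2 := hp.1.2.2
    simp at h1 h2 ⊢
    tauto
  have s := Finset.sum_le_sum (fun χ (_ : χ ∈ Finset.univ) => key χ)
  rw [Finset.sum_add_distrib, ← Finset.mul_sum] at s
  have c1 := count_sum k 2 E (fun b => ({b.1, b.2} : Finset α)) (by
    intro b hb
    apply Finset.card_pair
    intro h
    have := (hE b hb).2.2.1
    rw [h] at this
    exact lt_irrefl _ this)
  have c2 := count_sum k 1 (Finset.univ : Finset α) (fun b => ({b} : Finset α)) (by simp)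
  have c3 := count_sum k 4 X
    (fun b => ({b.1.1, b.1.2, b.2.1, b.2.2} : Finset α)) (by
    intro b hb
    simp only [Finset.mem_filter, Finset.mem_product, hX] at hb
    obtain ⟨⟨q1, q2⟩, q3⟩ := hb
    have l1 := (hE _ q1).2.2.1
    have l2 := (hE _ q2).2.2.1
    have n1 : b.1.1 ≠ b.1.2 := fun h => by rw [h] at l1; exact lt_irrefl _ l1
    have n2 : b.2.1 ≠ b.2.2 := fun h => by rw [h] at l2; exact lt_irrefl _ l2
    obtain ⟨n3, n4, n5, n6⟩ := crs_ne l1 q3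
    rw [Finset.card_insert_of_notMem, Finset.card_insert_of_notMem, Finset.card_pair n2]
    · simp [n5, n6]
    · simp [n1, n3, n4])
  set s1 := ∑ χ : α → Fin (k+1), (E.filter (fun b => ∀ i ∈ ({b.1, b.2} : Finset α), χ i = 0)).card
  set s2 := ∑ χ : α → Fin (k+1), 
    ((Finset.univ : Finset α).filter (fun b => ∀ i ∈ ({b} : Finset α), χ i = 0)).card
  set s3 := ∑ χ : α → Fin (k+1), 
    (X.filter (fun b => ∀ i ∈ ({b.1.1, b.1.2, b.2.1, b.2.2} : Finset α), χ i = 0)).card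
  have hpos : 0 < (k+1) ^ (Fintype.card α) := by positivity
  apply Nat.le_of_mul_le_mul_right _ hpos
  rw [Finset.card_univ] at c2
  calc E.card * (k+1)^2 * (k+1) ^ (Fintype.card α)
      = (s1 * (k+1)^2) * (k+1)^2 := by rw [c1]; ring
    _ = s1 * (k+1)^4 := by ring
    _ ≤ (3 * s2 + s3) * (k+1)^4 := Nat.mul_le_mul_right _ s
    _ = 3 * (s2 * (k+1)^1) * (k+1)^3 + s3 * (k+1)^4 := by ring
    _ = _ := by rw [c2, c3]; ring

lemma monot {u v a b c d : ℝ} (h1 : a < b) (h2 : b ≤ c) (h3 : c < d)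
    (h4 : (u * a + v) * (u * b + v) < 0) (h5 : (u * c + v) * (u * d + v) < 0) : False := by
  rcases le_or_gt 0 u with hu | hu
  · have e1 : u * a ≤ u * b := by nlinarith
    have e2 : u * b ≤ u * c := by nlinarith
    have e3 : u * c ≤ u * d := by nlinarith
    have : 0 < u * b + v := by
      by_contra h; push Not at h; nlinarith [mul_nonneg (neg_nonneg.2 h) (by linarith : 0 ≤ -(u * a + v))]
    nlinarith [mul_pos (by linarith : 0 < u * c + v) (by linarith : 0 < u * d + v)]
  · have e1 : u * b ≤ u * a := by nlinarith
    have e2 : u * c ≤ u * b := by nlinarith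
    have e3 : u * d ≤ u * c := by nlinarith
    have : u * b + v < 0 := by
      by_contra h; push Not at h; nlinarith [mul_nonneg h (by linarith : 0 ≤ (u * a + v))]
    nlinarith [mul_pos (by linarith : 0 < -(u * c + v)) (by linarith : 0 < -(u * d + v))]

lemma same_edge (hx : Function.Injective x) {S : Finset α} {E : Finset (α × α)}
    (hE : GoodE x y S E) {e e' f f' : α × α} (he : e ∈ E) (he' : e' ∈ E)
    (h1 : sl x y e = sl x y e') (h2 : ic x y e = ic x y e')
    (h3 : sl x y f = sl x y f') (h4 : ic x y f = ic x y f')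
    (hd : dv x y f e.1 * dv x y f e.2 < 0) (hd' : dv x y f' e'.1 * dv x y f' e'.2 < 0) :
    e = e' := by
  have aux : ∀ e e' f f' : α × α, e ∈ E → e' ∈ E → sl x y e = sl x y e' → ic x y e = ic x y e' →
      sl x y f = sl x y f' → ic x y f = ic x y f' → dv x y f e.1 * dv x y f e.2 < 0 →
      dv x y f' e'.1 * dv x y f' e'.2 < 0 → x e.1 < x e'.1 → False := by
    clear * - hE
    intro e e' f f' he he' h1 h2 h3 h4 hd hd' hlt
    obtain ⟨a1, a2, a3, a4⟩ := hE e he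
    obtain ⟨b1, b2, b3, b4⟩ := hE e' he'
    have e1 := on_fst x y e
    have e2 := on_snd x y e a3
    have f1 := on_fst x y e'
    have f2 := on_snd x y e' b3
    have hle : x e.2 ≤ x e'.1 := by
      by_contra h
      push Not at h
      apply a4 _ b1 hlt h
      unfold dv
      rw [f1, h1, h2]; ring
    unfold dv at hd hd'
    rw [← h3, ← h4] at hd'
    rw [f1, f2, ← h1, ← h2] at hd'
    rw [e1, e2] at hd
    apply monot (u := sl x y e - sl x y f) (v := ic x y e - ic x y f) a3 hle b3
    · convert hd using 1; ring
    · convert hd' using 1; ring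
  have : e.1 = e'.1 := by
    apply hx
    apply le_antisymm
    · by_contra hc
      exact aux e' e f' f he' he h1.symm h2.symm h3.symm h4.symm hd' hd (not_le.1 hc)
    · by_contra hc
      exact aux e e' f f' he he' h1 h2 h3 h4 hd hd' (not_le.1 hc)
  exact edge_eq hx hE he he' this h1

open Classical in
theorem rich_lines [Fintype α] (hx : Function.Injective x) (L : Finset (ℝ × ℝ)) (k : ℕ)
    (hk : 2 ≤ k)
    (hL : ∀ l ∈ L, k ≤ (Finset.univ.filter (fun p => y p = l.1 * x p + l.2)).card) :
    (L.card : ℝ) * k ^ 3 ≤ 2304 * ((Fintype.card α : ℝ) ^ 2 + Fintype.card α * k ^ 2) := by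
  set E : Finset (α × α) := Finset.univ.filter (fun e => x e.1 < x e.2 ∧
    (sl x y e, ic x y e) ∈ L ∧ ∀ w, x e.1 < x w → x w < x e.2 → dv x y e w ≠ 0) with hEdef
  have hE : GoodE x y Finset.univ E := by
    intro e he
    obtain ⟨_, h1, h2, h3⟩ := Finset.mem_filter.1 he
    exact ⟨Finset.mem_univ _, Finset.mem_univ _, h1, fun w _ => h3 w⟩
  have hX : ((E ×ˢ E).filter (fun p => crs x y p.1 p.2)).card ≤ L.card * L.card := by
    rw [← Finset.card_product]
    apply Finset.card_le_card_of_injOn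
      (fun p => ((sl x y p.1, ic x y p.1), (sl x y p.2, ic x y p.2)))
    · intro p hp
      simp only [Finset.coe_filter, Finset.mem_product, Set.mem_ofPred_eq] at hp
      have h1 := (Finset.mem_filter.1 hp.1.1).2.2.1
      have h2 := (Finset.mem_filter.1 hp.1.2).2.2.1
      simp [h1, h2]
    · intro p hp q hq hpq
      simp only [Finset.coe_filter, Finset.mem_product, Set.mem_ofPred_eq] at hp hq
      simp only [Prod.mk.injEq] at hpq
      obtain ⟨⟨h1, h2⟩, h3, h4⟩ := hpq
      exact Prod.ext
        (same_edge hx hE hp.1.1 hq.1.1 h1 h2 h3 h4 hp.2.2 hq.2.2)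
        (same_edge hx hE hp.1.2 hq.1.2 h3 h4 h1 h2 hp.2.1 hq.2.1)
  have hEc : L.card * (k - 1) ≤ E.card := by
    have hmaps : ∀ e ∈ E, (sl x y e, ic x y e) ∈ L := fun e he => (Finset.mem_filter.1 he).2.2.1
    rw [Finset.card_eq_sum_card_fiberwise hmaps, ← smul_eq_mul]
    apply Finset.card_nsmul_le_sum
    intro l hl
    have h0 := hL l hl
    set Q := Finset.univ.filter (fun p => y p = l.1 * x p + l.2) with hQ
    have hne : Q.Nonempty := Finset.card_pos.1 (by omega)
    obtain ⟨M, hM, hMax⟩ := Finset.exists_max_image Q x hne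
    have hsub : Q.erase M ⊆ (E.filter (fun e => (sl x y e, ic x y e) = l)).image Prod.fst := by
      intro p hp
      obtain ⟨hpM, hp⟩ := Finset.mem_erase.1 hp
      have hlt : x p < x M := lt_of_le_of_ne (hMax p hp) (fun h => hpM (hx h))
      obtain ⟨q, hq, hqm⟩ := Finset.exists_min_image (Q.filter (fun q => x p < x q)) x
        ⟨M, Finset.mem_filter.2 ⟨hM, hlt⟩⟩
      obtain ⟨hq, hpq⟩ := Finset.mem_filter.1 hq
      have hp' := (Finset.mem_filter.1 hp).2
      have hq' := (Finset.mem_filter.1 hq).2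
      have hsl : sl x y (p, q) = l.1 := by
        unfold sl
        simp only
        rw [hp', hq', div_eq_iff (sub_pos.2 hpq).ne']
        ring
      have hic : ic x y (p, q) = l.2 := by
        unfold ic
        rw [hsl]
        simp only
        rw [hp']; ring
      rw [Finset.mem_image]
      refine ⟨(p, q), ?_, rfl⟩
      simp only [Finset.mem_filter, Finset.mem_univ, true_and, hEdef, hsl, hic, and_true]
      refine ⟨hpq, hl, ?_⟩
      intro w h1 h2 h3
      unfold dv at h3
      rw [hsl, hic] at h3
      have := hqm w (by
        simp only [Finset.mem_filter, Finset.mem_univ, true_and, hQ]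
        exact ⟨by linarith, h1⟩)
      linarith
    have := (Finset.card_le_card hsub).trans Finset.card_image_le
    rw [Finset.card_erase_of_mem hM] at this
    omega
  set n := Fintype.card α with hn
  have hs : ∀ j : ℕ, 1 ≤ j → (E.card : ℝ) * j ^ 2 ≤ 3 * n * j ^ 3 + (L.card : ℝ) ^ 2 := by
    intro j hj
    obtain ⟨i, rfl⟩ : ∃ i, j = i + 1 := ⟨j - 1, by omega⟩
    have := (sampling hx E hE i).trans (Nat.add_le_add_left hX _)
    rw [← pow_two] at this
    exact_mod_cast this
  have hEc' : (L.card : ℝ) * k ≤ 2 * E.card := by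
    have : L.card * k ≤ 2 * E.card := by
      calc L.card * k ≤ L.card * (2 * (k - 1)) := Nat.mul_le_mul_left _ (by omega)
        _ = 2 * (L.card * (k-1)) := by ring
        _ ≤ _ := Nat.mul_le_mul_left _ hEc
    exact_mod_cast this
  have hl0 : (0 : ℝ) ≤ L.card := by positivity
  have hk0 : (0 : ℝ) ≤ k := by positivity
  have hn0 : (0 : ℝ) ≤ n := by positivity
  by_cases hcase : E.card < 6 * n
  · have hcase' : (E.card : ℝ) ≤ 6 * n := by exact_mod_cast hcase.le
    have : (L.card : ℝ) * k ≤ 12 * n := by linarith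
    have h2 : (L.card : ℝ) * k ^ 3 ≤ 12 * n * k ^ 2 := by
      calc (L.card : ℝ) * k ^ 3 = (L.card * k) * k ^ 2 := by ring
        _ ≤ _ := by gcongr
    nlinarith [sq_nonneg (n : ℝ), mul_nonneg hn0 (sq_nonneg (k : ℝ))]
  · push Not at hcase
    rcases Nat.eq_zero_or_pos L.card with hL0 | hLpos
    · rw [hL0]; simp; positivity
    have hnpos : 0 < n := by
      by_contra h
      obtain ⟨l, hl⟩ := Finset.card_pos.1 hLpos
      have h1 := hL l hl
      have h2 := Finset.card_le_univ (Finset.univ.filter (fun p => y p = l.1 * x p + l.2))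
      omega
    set j := E.card / (6 * n) with hj
    have hj1 : 1 ≤ j := (Nat.one_le_div_iff (by positivity)).2 hcase
    have hj2 : 6 * n * j ≤ E.card := Nat.mul_div_le _ _
    have hj3 : E.card < 6 * n * (j + 1) := by
      have := Nat.lt_mul_div_succ E.card (by positivity : 0 < 6 * n)
      simpa [hj] using this
    have hj4 : E.card ≤ 12 * n * j := by nlinarith
    have r2 : (6 * n * j : ℝ) ≤ E.card := by exact_mod_cast hj2
    have r4 : (E.card : ℝ) ≤ 12 * n * j := by exact_mod_cast hj4
    have r := hs j hj1
    have e0 : (0 : ℝ) ≤ E.card := by positivity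
    have r5 : (E.card : ℝ) * j ^ 2 ≤ 2 * (L.card : ℝ) ^ 2 := by
      nlinarith [mul_le_mul_of_nonneg_right r2 (sq_nonneg (j : ℝ))]
    have r6 : (E.card : ℝ) ^ 3 ≤ 288 * n ^ 2 * (L.card : ℝ) ^ 2 := by
      calc (E.card : ℝ) ^ 3 = (E.card : ℝ) * (E.card : ℝ) ^ 2 := by ring
        _ ≤ (E.card : ℝ) * (12 * n * j : ℝ) ^ 2 := by gcongr
        _ = 144 * (n : ℝ) ^ 2 * ((E.card : ℝ) * (j : ℝ) ^ 2) := by ring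
        _ ≤ 144 * (n : ℝ) ^ 2 * (2 * (L.card : ℝ) ^ 2) := by gcongr
        _ = _ := by ring
    have r7 : ((L.card : ℝ) * k) ^ 3 ≤ (2 * E.card) ^ 3 := by gcongr
    have r8 : ((L.card : ℝ) * k ^ 3) * (L.card : ℝ) ^ 2 ≤ (2304 * n ^ 2) * (L.card : ℝ) ^ 2 := by
      nlinarith
    have hLp : (0 : ℝ) < (L.card : ℝ) ^ 2 := by positivity
    have := le_of_mul_le_mul_right r8 hLp
    nlinarith [mul_nonneg hn0 (sq_nonneg (k : ℝ))]

end crossing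
section triangles

variable {α : Type*} [Fintype α] {x y : α → ℝ}

lemma on_snd' (e : α × α) (h : x e.1 ≠ x e.2) : y e.2 = sl x y e * x e.2 + ic x y e := by
  have h' : x e.2 - x e.1 ≠ 0 := sub_ne_zero.2 h.symm
  have : sl x y e * (x e.2 - x e.1) = y e.2 - y e.1 := by
    unfold sl; field_simp
  simp only [ic]; linarith

/-- points on a line -/
def pts (x y : α → ℝ) (l : ℝ × ℝ) : Finset α := by
  classical exact Finset.univ.filter (fun p => y p = l.1 * x p + l.2)

/-- the line of a pair -/
def lin (x y : α → ℝ) (e : α × α) : ℝ × ℝ := (sl x y e, ic x y e)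

lemma mem_pts {l : ℝ × ℝ} {p : α} : p ∈ pts x y l ↔ y p = l.1 * x p + l.2 := by
  simp [pts]

lemma fst_mem (e : α × α) : e.1 ∈ pts x y (lin x y e) := by
  rw [mem_pts]; exact on_fst x y e

lemma snd_mem (hx : Function.Injective x) (e : α × α) (h : e.1 ≠ e.2) :
    e.2 ∈ pts x y (lin x y e) := by
  rw [mem_pts]; exact on_snd' e (fun h' => h (hx h'))

/-- right angle at `t.1` -/
def Rt (x y : α → ℝ) (t : α × α × α) : Prop :=
  t.1 ≠ t.2.1 ∧ t.1 ≠ t.2.2 ∧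
  (x t.2.1 - x t.1) * (x t.2.2 - x t.1) + (y t.2.1 - y t.1) * (y t.2.2 - y t.1) = 0

lemma rt_slope (hx : Function.Injective x) {t : α × α × α} (h : Rt x y t) :
    1 + sl x y (t.1, t.2.1) * sl x y (t.1, t.2.2) = 0 := by
  obtain ⟨h1, h2, h3⟩ := h
  have n1 : x t.2.1 - x t.1 ≠ 0 := sub_ne_zero.2 (fun h => h1 (hx h.symm))
  have n2 : x t.2.2 - x t.1 ≠ 0 := sub_ne_zero.2 (fun h => h2 (hx h.symm))
  unfold sl
  simp only
  field_simp
  linarith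

lemma rt_line (hx : Function.Injective x) {q r s s' : α} (h : Rt x y (q, r, s))
    (h' : Rt x y (q, r, s')) : s' ∈ pts x y (lin x y (q, s)) := by
  have e1 := rt_slope hx h
  have e2 := rt_slope hx h'
  simp only at e1 e2
  have hne : sl x y (q, r) ≠ 0 := by
    intro h0; rw [h0] at e1; norm_num at e1
  have hs : sl x y (q, s) = sl x y (q, s') := by
    apply mul_left_cancel₀ hne; linarith
  have : lin x y (q, s) = lin x y (q, s') := by
    simp [lin, ic, hs]
  rw [this]
  exact snd_mem hx (q, s') h'.2.1

lemma rt_foot (hx : Function.Injective x) {q r s q' r' : α} (h : Rt x y (q, r, s))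
    (h' : Rt x y (q', r', s)) (hl : lin x y (q, r) = lin x y (q', r')) : q = q' := by
  have h1 := fst_mem (x := x) (y := y) (q, r)
  have h2 := fst_mem (x := x) (y := y) (q', r')
  rw [← hl, mem_pts] at h2
  rw [mem_pts] at h1
  obtain ⟨a1, a2, a3⟩ := h
  obtain ⟨b1, b2, b3⟩ := h'
  have h3 := snd_mem (x := x) (y := y) hx (q, r) a1
  have h4 := snd_mem (x := x) (y := y) hx (q', r') b1
  rw [mem_pts] at h3
  rw [← hl, mem_pts] at h4
  simp only at *
  generalize (lin x y (q, r)).1 = m at *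
  generalize (lin x y (q, r)).2 = c at *
  have n1 : x r - x q ≠ 0 := sub_ne_zero.2 (fun h => a1 (hx h.symm))
  have n2 : x r' - x q' ≠ 0 := sub_ne_zero.2 (fun h => b1 (hx h.symm))
  rw [h3, h1] at a3
  rw [h4, h2] at b3
  have c1 : (x s - x q) + m * (y s - (m * x q + c)) = 0 := by
    apply mul_left_cancel₀ n1; linarith
  have c2 : (x s - x q') + m * (y s - (m * x q' + c)) = 0 := by
    apply mul_left_cancel₀ n2; linarith
  apply hx
  have : (1 + m ^ 2) * (x q - x q') = 0 := by linarith
  rcases mul_eq_zero.1 this with h | h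
  · nlinarith [sq_nonneg m]
  · linarith

lemma arith_dich {L k n : ℝ} (hL : 0 ≤ L) (hk : 0 < k) (hn : 0 ≤ n)
    (h : L * k ^ 3 ≤ 2304 * (n ^ 2 + n * k ^ 2)) {T : ℝ}
    (h1 : T ≤ L * (2 * k) ^ 3) (h2 : T ≤ L * (2 * k * n)) : T ≤ 36864 * n ^ 2 := by
  rcases le_total (k ^ 2) n with h' | h'
  · have : n * k ^ 2 ≤ n * n := by gcongr
    nlinarith
  · have h3 : (L * k) * k ^ 2 ≤ (4608 * n) * k ^ 2 := by nlinarith [mul_le_mul_of_nonneg_left h' hn]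
    have h4 := le_of_mul_le_mul_right h3 (by positivity)
    nlinarith [mul_le_mul_of_nonneg_right h4 hn]

open Classical in
lemma fib1 (hx : Function.Injective x) (T : Finset (α × α × α)) (M : ℕ)
    (hR : ∀ t ∈ T, Rt x y t)
    (hle : ∀ t ∈ T,
      (pts x y (lin x y (t.1, t.2.2))).card ≤ (pts x y (lin x y (t.1, t.2.1))).card)
    (hhi : ∀ t ∈ T, (pts x y (lin x y (t.1, t.2.1))).card ≤ M) (l : ℝ × ℝ)
    (hc : (pts x y l).card ≤ M) :
    (T.filter (fun t => lin x y (t.1, t.2.1) = l)).card ≤ M ^ 3 := by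
  set F := T.filter (fun t => lin x y (t.1, t.2.1) = l) with hF
  have hm : ∀ t ∈ F, (t.1, t.2.1) ∈ (pts x y l) ×ˢ (pts x y l) := by
    intro t ht
    obtain ⟨h1, h2⟩ := Finset.mem_filter.1 ht
    rw [← h2]
    exact Finset.mem_product.2
      ⟨fst_mem (t.1, t.2.1), snd_mem hx (t.1, t.2.1) (hR t h1).1⟩
  rw [Finset.card_eq_sum_card_fiberwise hm]
  have : ∀ qr ∈ (pts x y l) ×ˢ (pts x y l),
      (F.filter (fun t => (t.1, t.2.1) = qr)).card ≤ M := by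
    intro qr _
    rcases (F.filter (fun t => (t.1, t.2.1) = qr)).eq_empty_or_nonempty with h | h
    · rw [h]; simp
    · obtain ⟨⟨q, r, s⟩, ht⟩ := h
      obtain ⟨ht, ht2⟩ := Finset.mem_filter.1 ht
      obtain ⟨ht0, ht3⟩ := Finset.mem_filter.1 ht
      simp only at ht2
      subst ht2
      refine le_trans ?_ ((hle (q, r, s) ht0).trans (hhi (q, r, s) ht0))
      apply Finset.card_le_card_of_injOn (fun t => t.2.2)
      · rintro ⟨q', r', s'⟩ hs
        obtain ⟨hs, hs2⟩ := Finset.mem_filter.1 (Finset.mem_coe.1 hs)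
        obtain ⟨hs0, hs3⟩ := Finset.mem_filter.1 hs
        simp only [Prod.mk.injEq] at hs2
        obtain ⟨rfl, rfl⟩ := hs2
        exact rt_line hx (hR _ ht0) (hR _ hs0)
      · rintro ⟨q', r', s'⟩ hs ⟨qb, rb, sb⟩ hs' hss
        have g1 := (Finset.mem_filter.1 hs).2
        have g2 := (Finset.mem_filter.1 hs').2
        simp only [Prod.mk.injEq] at g1 g2 hss ⊢
        exact ⟨g1.1.trans g2.1.symm, g1.2.trans g2.2.symm, hss⟩
  calc _ ≤ ((pts x y l) ×ˢ (pts x y l)).card • M :=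
        Finset.sum_le_card_nsmul _ _ _ this
    _ = (pts x y l).card * (pts x y l).card * M := by
        rw [Finset.card_product, smul_eq_mul]
    _ ≤ M * M * M := by gcongr
    _ = _ := by ring

open Classical in
lemma fib2 (hx : Function.Injective x) (T : Finset (α × α × α)) (M : ℕ)
    (hR : ∀ t ∈ T, Rt x y t) (l : ℝ × ℝ)
    (hc : (pts x y l).card ≤ M) :
    (T.filter (fun t => lin x y (t.1, t.2.1) = l)).card ≤ M * Fintype.card α := by
  set F := T.filter (fun t => lin x y (t.1, t.2.1) = l) with hF
  calc F.card ≤ ((pts x y l) ×ˢ (Finset.univ : Finset α)).card := by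
        apply Finset.card_le_card_of_injOn (fun t => (t.2.1, t.2.2))
        · intro t ht
          obtain ⟨h1, h2⟩ := Finset.mem_filter.1 ht
          have := snd_mem (x := x) (y := y) hx (t.1, t.2.1) (hR t h1).1
          rw [h2] at this
          simpa using this
        · rintro ⟨q', r', s'⟩ hs ⟨qb, rb, sb⟩ hs' hss
          obtain ⟨h1, h2⟩ := Finset.mem_filter.1 hs
          obtain ⟨h1', h2'⟩ := Finset.mem_filter.1 hs'
          simp only [Prod.mk.injEq] at hss h2 h2' ⊢
          obtain ⟨rfl, rfl⟩ := hss
          exact ⟨rt_foot hx (hR _ h1) (hR _ h1') (h2.trans h2'.symm), rfl, rfl⟩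
    _ = (pts x y l).card * Fintype.card α := by rw [Finset.card_product, Finset.card_univ]
    _ ≤ _ := by gcongr

open Classical in
lemma tri_level (hx : Function.Injective x) (i : ℕ) :
    ((Finset.univ.filter (fun t : α × α × α => Rt x y t ∧
      (pts x y (lin x y (t.1, t.2.2))).card ≤ (pts x y (lin x y (t.1, t.2.1))).card ∧
      Nat.log 2 (pts x y (lin x y (t.1, t.2.1))).card = i)).card : ℝ) ≤
      36864 * (Fintype.card α : ℝ) ^ 2 := by
  set T := (Finset.univ.filter (fun t : α × α × α => Rt x y t ∧
      (pts x y (lin x y (t.1, t.2.2))).card ≤ (pts x y (lin x y (t.1, t.2.1))).card ∧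
      Nat.log 2 (pts x y (lin x y (t.1, t.2.1))).card = i)) with hT
  set L := T.image (fun t => lin x y (t.1, t.2.1)) with hL
  have hmem : ∀ t ∈ T, Rt x y t ∧
      (pts x y (lin x y (t.1, t.2.2))).card ≤ (pts x y (lin x y (t.1, t.2.1))).card ∧
      Nat.log 2 (pts x y (lin x y (t.1, t.2.1))).card = i := fun t ht => (Finset.mem_filter.1 ht).2
  have h2le : ∀ t ∈ T, 2 ≤ (pts x y (lin x y (t.1, t.2.1))).card := by
    intro t ht
    have h := (hmem t ht).1
    apply Finset.one_lt_card.2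
    exact ⟨t.1, fst_mem (t.1, t.2.1), t.2.1, snd_mem hx (t.1, t.2.1) h.1, h.1⟩
  rcases Nat.eq_zero_or_pos i with hi | hi
  · have : T = ∅ := by
      apply Finset.eq_empty_of_forall_notMem
      intro t ht
      have h1 := h2le t ht
      have h2 := (hmem t ht).2.2
      have := Nat.log_pos (b := 2) (by norm_num) h1
      omega
    rw [this]; simp
  have hlo : ∀ t ∈ T, 2 ^ i ≤ (pts x y (lin x y (t.1, t.2.1))).card := by
    intro t ht
    rw [← (hmem t ht).2.2]
    apply Nat.pow_log_le_self
    have := h2le t ht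
    omega
  have hhi : ∀ t ∈ T, (pts x y (lin x y (t.1, t.2.1))).card ≤ 2 * 2 ^ i := by
    intro t ht
    have := Nat.lt_pow_succ_log_self (b := 2) (by norm_num)
      (pts x y (lin x y (t.1, t.2.1))).card
    rw [(hmem t ht).2.2, Nat.succ_eq_add_one, pow_succ] at this
    omega
  have hrich := rich_lines (x := x) (y := y) hx L (2 ^ i)
    (by calc 2 = 2 ^ 1 := by norm_num
          _ ≤ 2 ^ i := Nat.pow_le_pow_right (by norm_num) hi)
    (by
      intro l hl
      obtain ⟨t, ht, rfl⟩ := Finset.mem_image.1 hl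
      have := hlo t ht
      convert this using 2
      unfold pts
      congr)
  have hfib : ∀ t ∈ T, lin x y (t.1, t.2.1) ∈ L := fun t ht => Finset.mem_image_of_mem _ ht
  have b1 : T.card ≤ L.card * (2 * 2 ^ i) ^ 3 := by
    rw [Finset.card_eq_sum_card_fiberwise hfib]
    rw [← smul_eq_mul]
    apply Finset.sum_le_card_nsmul
    intro l hl
    obtain ⟨t0, ht0, hl0⟩ := Finset.mem_image.1 hl
    have hc := hhi t0 ht0
    rw [hl0] at hc
    exact fib1 hx T _ (fun t ht => (hmem t ht).1) (fun t ht => (hmem t ht).2.1) hhi l hc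
  have b2 : T.card ≤ L.card * (2 * 2 ^ i * Fintype.card α) := by
    rw [Finset.card_eq_sum_card_fiberwise hfib]
    rw [← smul_eq_mul]
    apply Finset.sum_le_card_nsmul
    intro l hl
    obtain ⟨t0, ht0, hl0⟩ := Finset.mem_image.1 hl
    have hc := hhi t0 ht0
    rw [hl0] at hc
    exact fib2 hx T _ (fun t ht => (hmem t ht).1) l hc
  apply arith_dich (L := L.card) (k := 2 ^ i) (by positivity) (by positivity) (by positivity)
  · exact_mod_cast hrich
  · exact_mod_cast b1
  · exact_mod_cast b2

open Classical in
lemma tri_total (hx : Function.Injective x) :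
    ((Finset.univ.filter (fun t : α × α × α => Rt x y t)).card : ℝ) ≤
      73728 * (Fintype.card α : ℝ) ^ 2 * (Nat.log 2 (Fintype.card α) + 1) := by
  set K : α → α → ℕ := fun a b => (pts x y (lin x y (a, b))).card with hK
  set T' := (Finset.univ.filter (fun t : α × α × α => Rt x y t ∧ K t.1 t.2.2 ≤ K t.1 t.2.1))
    with hT'
  have h1 : (Finset.univ.filter (fun t : α × α × α => Rt x y t)).card ≤ 2 * T'.card := by
    have hsub : (Finset.univ.filter (fun t : α × α × α => Rt x y t)) ⊆
        T' ∪ T'.image (fun t => (t.1, t.2.2, t.2.1)) := by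
      rintro ⟨q, r, s⟩ ht
      have ht := (Finset.mem_filter.1 ht).2
      rcases le_total (K q s) (K q r) with h | h
      · apply Finset.mem_union_left
        exact Finset.mem_filter.2 ⟨Finset.mem_univ _, ht, h⟩
      · apply Finset.mem_union_right
        refine Finset.mem_image.2 ⟨(q, s, r), Finset.mem_filter.2 ⟨Finset.mem_univ _, ?_, h⟩, rfl⟩
        obtain ⟨a, b, c⟩ := ht
        refine ⟨b, a, ?_⟩
        simp only at c ⊢
        linarith
    have := (Finset.card_le_card hsub).trans (Finset.card_union_le _ _)
    have h3 := Finset.card_image_le (s := T') (f := fun t => (t.1, t.2.2, t.2.1))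
    omega
  have h2 : (T'.card : ℝ) ≤ (Nat.log 2 (Fintype.card α) + 1) *
      (36864 * (Fintype.card α : ℝ) ^ 2) := by
    have hm : ∀ t ∈ T', Nat.log 2 (K t.1 t.2.1) ∈ Finset.range (Nat.log 2 (Fintype.card α) + 1) := by
      intro t _
      rw [Finset.mem_range, Nat.lt_succ_iff]
      exact Nat.log_mono_right (Finset.card_le_univ _)
    rw [Finset.card_eq_sum_card_fiberwise hm]
    push_cast
    calc _ ≤ (Finset.range (Nat.log 2 (Fintype.card α) + 1)).card •
            (36864 * (Fintype.card α : ℝ) ^ 2) := by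
          apply Finset.sum_le_card_nsmul
          intro i _
          have := tri_level (y := y) hx i
          rw [hT', Finset.filter_filter]
          simpa only [and_assoc] using this
      _ = _ := by rw [Finset.card_range, nsmul_eq_mul]; push_cast; ring
  have h1' : ((Finset.univ.filter (fun t : α × α × α => Rt x y t)).card : ℝ) ≤ 2 * T'.card := by
    exact_mod_cast h1
  linarith

/-- additive quadruple on the paraboloid over the points -/
def Quad (x y : α → ℝ) (t : α × α × α × α) : Prop :=
  x t.1 + x t.2.1 = x t.2.2.1 + x t.2.2.2 ∧ y t.1 + y t.2.1 = y t.2.2.1 + y t.2.2.2 ∧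
  (x t.1 ^ 2 + y t.1 ^ 2) + (x t.2.1 ^ 2 + y t.2.1 ^ 2) =
  (x t.2.2.1 ^ 2 + y t.2.2.1 ^ 2) + (x t.2.2.2 ^ 2 + y t.2.2.2 ^ 2)

open Classical in
lemma energy_inj (hx : Function.Injective x) :
    ((Finset.univ.filter (fun t : α × α × α × α => Quad x y t)).card : ℝ) ≤
      73730 * (Fintype.card α : ℝ) ^ 2 * (Nat.log 2 (Fintype.card α) + 1) := by
  set Q := Finset.univ.filter (fun t : α × α × α × α => Quad x y t) with hQ
  set A : Finset (α × α × α) := (Finset.univ : Finset (α × α)).image (fun t => (t.1, t.1, t.2))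
  set B : Finset (α × α × α) := (Finset.univ : Finset (α × α)).image (fun t => (t.1, t.2, t.1))
  have hA : A.card ≤ Fintype.card α ^ 2 := by
    refine Finset.card_image_le.trans ?_
    rw [Finset.card_univ, Fintype.card_prod, pow_two]
  have hB : B.card ≤ Fintype.card α ^ 2 := by
    refine Finset.card_image_le.trans ?_
    rw [Finset.card_univ, Fintype.card_prod, pow_two]
  have h1 : Q.card ≤ (A ∪ B ∪ Finset.univ.filter (fun t : α × α × α => Rt x y t)).card := by
    apply Finset.card_le_card_of_injOn (fun t => (t.1, t.2.2.1, t.2.2.2))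
    · rintro ⟨p1, p2, p3, p4⟩ ht
      obtain ⟨e1, e2, e3⟩ := (Finset.mem_filter.1 ht).2
      simp only at e1 e2 e3
      by_cases h3 : p1 = p3
      · subst h3
        simp [A]
      by_cases h4 : p1 = p4
      · subst h4
        simp [B]
      apply Finset.mem_coe.2
      apply Finset.mem_union_right
      refine Finset.mem_filter.2 ⟨Finset.mem_univ _, h3, h4, ?_⟩
      simp only
      have e1' : x p2 = x p3 + x p4 - x p1 := by linarith
      have e2' : y p2 = y p3 + y p4 - y p1 := by linarith
      rw [e1', e2'] at e3
      nlinarith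
    · rintro ⟨p1, p2, p3, p4⟩ ht ⟨q1, q2, q3, q4⟩ ht' h
      obtain ⟨e1, e2, e3⟩ := (Finset.mem_filter.1 ht).2
      obtain ⟨e1', e2', e3'⟩ := (Finset.mem_filter.1 ht').2
      simp only [Prod.mk.injEq] at h e1 e1' ⊢
      obtain ⟨rfl, rfl, rfl⟩ := h
      refine ⟨rfl, hx (by linarith), rfl, rfl⟩
  have h2 := Finset.card_union_le (A ∪ B) (Finset.univ.filter (fun t : α × α × α => Rt x y t))
  have h3 := Finset.card_union_le A B
  have h4 := tri_total (y := y) hx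
  have h5 : (Q.card : ℝ) ≤ 2 * (Fintype.card α : ℝ) ^ 2 +
      (Finset.univ.filter (fun t : α × α × α => Rt x y t)).card := by
    have : Q.card ≤ 2 * (Fintype.card α) ^ 2 +
      (Finset.univ.filter (fun t : α × α × α => Rt x y t)).card := by omega
    exact_mod_cast this
  have h6 : (0 : ℝ) ≤ (Fintype.card α : ℝ) ^ 2 * (Nat.log 2 (Fintype.card α)) := by positivity
  nlinarith

open Classical in
theorem energy_s8 (hxy : ∀ a b : α, x a = x b → y a = y b → a = b) :
    ((Finset.univ.filter (fun t : α × α × α × α => Quad x y t)).card : ℝ) ≤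
      73730 * (Fintype.card α : ℝ) ^ 2 * (Nat.log 2 (Fintype.card α) + 1) := by
  obtain ⟨t, ht⟩ := Infinite.exists_notMem_finset
    ((Finset.univ : Finset (α × α)).image (fun p => (x p.1 - x p.2) / (y p.1 - y p.2)))
  have hinj : Function.Injective (fun a => x a - t * y a) := by
    intro a b hab
    simp only at hab
    by_cases hy : y a = y b
    · exact hxy a b (by rw [hy] at hab; linarith) hy
    · exfalso
      apply ht
      refine Finset.mem_image.2 ⟨(a, b), Finset.mem_univ _, ?_⟩
      rw [div_eq_iff (sub_ne_zero.2 hy)]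
      linarith
  have := energy_inj (x := fun a => x a - t * y a) (y := fun a => t * x a + y a) hinj
  refine le_trans ?_ this
  norm_cast
  apply Finset.card_le_card
  intro p hp
  obtain ⟨e1, e2, e3⟩ := (Finset.mem_filter.1 hp).2
  refine Finset.mem_filter.2 ⟨Finset.mem_univ _, ?_⟩
  unfold Quad
  refine ⟨by linear_combination e1 - t * e2, by linear_combination t * e1 + e2, ?_⟩
  linear_combination (1 + t ^ 2) * e3

end triangles
section analysis

/-- the ambient space -/
abbrev E3 := EuclideanSpace ℝ (Fin 3)

lemma norm_ee (t : ℝ) : ‖ee t‖ = 1 := by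
  unfold ee
  rw [show (2 * Real.pi * Complex.I * t : ℂ) = ((2 * Real.pi * t : ℝ) : ℂ) * Complex.I by
    push_cast; ring]
  exact Complex.norm_exp_ofReal_mul_I _

lemma ee_add (s t : ℝ) : ee (s + t) = ee s * ee t := by
  unfold ee
  rw [← Complex.exp_add]
  congr 1
  push_cast; ring

lemma ee_neg (t : ℝ) : ee (-t) = (starRingEnd ℂ) (ee t) := by
  unfold ee
  rw [← Complex.exp_conj]
  congr 1
  simp [Complex.conj_ofNat]

lemma ee_zero : ee 0 = 1 := by simp [ee]

lemma continuous_ee : Continuous ee := by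
  unfold ee; fun_prop

lemma continuous_eev (v : E3) : Continuous (fun x : E3 => ee ⟪v, x⟫) :=
  continuous_ee.comp (by fun_prop)

lemma fourierChar_eq_ee (t : ℝ) : ((Real.fourierChar t : Circle) : ℂ) = ee t := by
  rw [Real.fourierChar_apply]; unfold ee; congr 1; push_cast; ring

lemma vol_ball (c : E3) {R : ℝ} (hR : 0 < R) :
    (volume (Metric.ball c R)).toReal = R ^ 3 * (volume (Metric.ball (0 : E3) 1)).toReal := by
  rw [Measure.addHaar_ball volume c hR.le, ENNReal.toReal_mul,
    ENNReal.toReal_ofReal (by positivity)]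
  simp

lemma vol_pos (c : E3) {R : ℝ} (hR : 0 < R) : 0 < (volume (Metric.ball c R)).toReal :=
  ENNReal.toReal_pos (Metric.measure_ball_pos volume c hR).ne' measure_ball_lt_top.ne

lemma ball_int (v c : E3) {R : ℝ} (hR : 0 < R) :
    ∫ x in Metric.ball c R, ee ⟪v, x⟫ =
      (R ^ 3 : ℝ) • (ee ⟪v, c⟫ * ∫ x in Metric.ball (0 : E3) 1, ee ⟪R • v, x⟫) := by
  have h1 : ∫ x in Metric.ball c R, ee ⟪v, x⟫ = ∫ x in Metric.ball (0 : E3) R, ee ⟪v, c + x⟫ := by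
    rw [← integral_indicator Metric.isOpen_ball.measurableSet,
      ← integral_indicator Metric.isOpen_ball.measurableSet,
      ← integral_add_left_eq_self _ c]
    congr 1
    ext x
    simp only [Set.indicator, Metric.mem_ball, dist_self_add_left, dist_zero_right]
  have h2 := Measure.setIntegral_comp_smul_of_pos volume (fun x : E3 => ee ⟪v, c + x⟫)
    (Metric.ball 0 1) hR
  rw [smul_unitBall_of_pos hR] at h2
  rw [h1]
  have h3 : ∫ x in Metric.ball (0 : E3) R, ee ⟪v, c + x⟫ =
      (R ^ 3 : ℝ) • ∫ x in Metric.ball (0 : E3) 1, ee ⟪v, c + R • x⟫ := by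
    rw [h2, smul_smul]
    simp
    rw [mul_inv_cancel₀ (by exact_mod_cast (pow_pos hR 3).ne'), one_mul]
  rw [h3]
  congr 1
  rw [← integral_const_mul]
  congr 1
  ext x
  rw [inner_add_right, ee_add, inner_smul_right, inner_smul_left]
  simp

lemma avg_small (v : E3) (hv : v ≠ 0) {η : ℝ} (hη : 0 < η) :
    ∃ R₀ : ℝ, ∀ R, R₀ ≤ R → 0 < R → ∀ c : E3, ‖∫ x in Metric.ball c R, ee ⟪v, x⟫‖ ≤
      η * (volume (Metric.ball c R)).toReal := by
  have hV := vol_pos (0 : E3) one_pos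
  have h := tendsto_integral_exp_inner_smul_cocompact
    ((Metric.ball (0 : E3) 1).indicator (fun _ => (1 : ℂ)))
  have h2 : Filter.Tendsto (fun R : ℝ => R • (-v)) Filter.atTop (Filter.cocompact E3) := by
    rw [← Metric.cobounded_eq_cocompact, ← comap_norm_atTop, Filter.tendsto_comap_iff]
    simp only [Function.comp_def, norm_smul, norm_neg]
    exact (tendsto_norm_atTop_atTop).atTop_mul_const (norm_pos_iff.2 hv)
  have h3 := (h.comp h2).norm
  rw [norm_zero] at h3
  have h4 := h3.eventually_lt_const (mul_pos hη hV)
  obtain ⟨R₀, hR₀⟩ := Filter.eventually_atTop.1 h4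
  refine ⟨R₀, fun R hR hpos c => ?_⟩
  have h5 := hR₀ R hR
  rw [ball_int v c hpos, norm_smul, norm_mul, norm_ee, one_mul, vol_ball c hpos,
    Real.norm_of_nonneg (by positivity)]
  have h6 : ∫ x in Metric.ball (0 : E3) 1, ee ⟪R • v, x⟫ =
      ∫ w : E3, Real.fourierChar (-⟪w, R • -v⟫) •
        (Metric.ball (0 : E3) 1).indicator (fun _ => (1 : ℂ)) w := by
    rw [← integral_indicator Metric.isOpen_ball.measurableSet]
    congr 1
    ext w
    by_cases hw : w ∈ Metric.ball (0 : E3) 1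
    · rw [Set.indicator_of_mem hw, Set.indicator_of_mem hw, Circle.smul_def, fourierChar_eq_ee,
        smul_neg, inner_neg_right, neg_neg, real_inner_comm]
      simp
    · rw [Set.indicator_of_notMem hw, Set.indicator_of_notMem hw, smul_zero]
  rw [h6]
  simp only [Function.comp] at h5
  nlinarith [mul_le_mul_of_nonneg_left h5.le (by positivity : 0 ≤ R ^ 3)]

lemma expand (Λ : Finset E3) (a : E3 → ℂ) (x : E3) :
    ((‖∑ ξ ∈ Λ, a ξ * ee ⟪ξ, x⟫‖ ^ 4 : ℝ) : ℂ) =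
      ∑ t ∈ Λ ×ˢ Λ ×ˢ Λ ×ˢ Λ,
        (a t.1 * a t.2.1 * (starRingEnd ℂ (a t.2.2.1)) * (starRingEnd ℂ (a t.2.2.2))) *
          ee ⟪t.1 + t.2.1 - t.2.2.1 - t.2.2.2, x⟫ := by
  set f := ∑ ξ ∈ Λ, a ξ * ee ⟪ξ, x⟫ with hf
  have h1 : ((‖f‖ ^ 4 : ℝ) : ℂ) = f * (f * (starRingEnd ℂ f * starRingEnd ℂ f)) := by
    have := Complex.mul_conj' f
    push_cast
    calc (‖f‖ : ℂ) ^ 4 = ((‖f‖ : ℂ) ^ 2) * ((‖f‖ : ℂ) ^ 2) := by ring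
      _ = _ := by rw [← this]; ring
  have h2 : starRingEnd ℂ f = ∑ ξ ∈ Λ, starRingEnd ℂ (a ξ) * ee (-⟪ξ, x⟫) := by
    rw [hf, map_sum]
    simp [ee_neg]
  rw [h1, h2, hf, Finset.sum_mul_sum, Finset.sum_mul_sum, Finset.sum_product]
  rw [Finset.sum_mul_sum]
  simp_rw [Finset.sum_product, Finset.mul_sum]
  refine Finset.sum_congr rfl fun p _ => Finset.sum_congr rfl fun q _ =>
    Finset.sum_congr rfl fun r _ => Finset.sum_congr rfl fun s _ => ?_
  rw [inner_sub_left, inner_sub_left, inner_add_left, sub_eq_add_neg, sub_eq_add_neg,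
    ee_add, ee_add, ee_add]
  ring

lemma avg_main (Λ : Finset E3) : ∃ R₀ : ℝ, 1 ≤ R₀ ∧ ∀ R, R₀ ≤ R → ∀ c : E3, ∀ a : E3 → ℂ,
    ∫ x in Metric.ball c R, ‖∑ ξ ∈ Λ, a ξ * ee ⟪ξ, x⟫‖ ^ 4 ≤
      (volume (Metric.ball c R)).toReal *
      (∑ t ∈ (Λ ×ˢ Λ ×ˢ Λ ×ˢ Λ).filter (fun t => t.1 + t.2.1 = t.2.2.1 + t.2.2.2),
        ‖a t.1‖ * ‖a t.2.1‖ * ‖a t.2.2.1‖ * ‖a t.2.2.2‖ + (∑ ξ ∈ Λ, ‖a ξ‖ ^ 2) ^ 2) := by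
  classical
  set N : ℝ := (Λ.card : ℝ) with hN
  set η : ℝ := 1 / (N ^ 2 + 1) with hη
  have hη0 : 0 < η := by positivity
  have hη1 : η * N ^ 2 ≤ 1 := by
    rw [hη, div_mul_eq_mul_div, div_le_one (by positivity)]; linarith
  have h0 : ∀ v : E3, ∃ R₀ : ℝ, v ≠ 0 → ∀ R, R₀ ≤ R → 0 < R → ∀ c : E3,
      ‖∫ x in Metric.ball c R, ee ⟪v, x⟫‖ ≤ η * (volume (Metric.ball c R)).toReal := by
    intro v
    by_cases hv : v = 0
    · exact ⟨0, fun h => absurd hv h⟩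
    · obtain ⟨R₀, h⟩ := avg_small v hv hη0
      exact ⟨R₀, fun _ => h⟩
  choose ρ hρ using h0
  obtain ⟨M, hM⟩ := Finset.exists_le ((Λ ×ˢ Λ ×ˢ Λ ×ˢ Λ).image
    (fun t => ρ (t.1 + t.2.1 - t.2.2.1 - t.2.2.2)))
  refine ⟨max M 1, le_max_right _ _, fun R hR c a => ?_⟩
  have hRM : M ≤ R := (le_max_left _ _).trans hR
  have hR1 : 1 ≤ R := (le_max_right _ _).trans hR
  have hRpos : 0 < R := by linarith
  set V := (volume (Metric.ball c R)).toReal with hV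
  have hV0 : 0 < V := vol_pos c hRpos
  set Q := Λ ×ˢ Λ ×ˢ Λ ×ˢ Λ with hQ
  set w : E3 × E3 × E3 × E3 → ℝ := fun t => ‖a t.1‖ * ‖a t.2.1‖ * ‖a t.2.2.1‖ * ‖a t.2.2.2‖ with hw
  have hw0 : ∀ t, 0 ≤ w t := fun t => by simp only [hw]; positivity
  set F : E3 → ℝ := fun x => ‖∑ ξ ∈ Λ, a ξ * ee ⟪ξ, x⟫‖ ^ 4 with hF
  have hIntg : ∀ v : E3, IntegrableOn (fun x => ee ⟪v, x⟫) (Metric.ball c R) := by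
    intro v
    exact ((continuous_eev v).continuousOn.integrableOn_compact
      (isCompact_closedBall c R)).mono_set Metric.ball_subset_closedBall
  have e1 : ((∫ x in Metric.ball c R, F x : ℝ) : ℂ) = ∑ t ∈ Q,
      (a t.1 * a t.2.1 * (starRingEnd ℂ (a t.2.2.1)) * (starRingEnd ℂ (a t.2.2.2))) *
          ∫ x in Metric.ball c R, ee ⟪t.1 + t.2.1 - t.2.2.1 - t.2.2.2, x⟫ := by
    rw [← integral_complex_ofReal]
    simp_rw [← integral_const_mul]
    rw [← integral_finsetSum]
    · congr 1
      ext x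
      exact expand Λ a x
    · intro t _
      exact (hIntg _).const_mul _
  have hFn : 0 ≤ ∫ x in Metric.ball c R, F x := integral_nonneg (fun x => by
    simp only [hF]; positivity)
  have e2 : ∫ x in Metric.ball c R, F x ≤ ∑ t ∈ Q, w t *
      ‖∫ x in Metric.ball c R, ee ⟪t.1 + t.2.1 - t.2.2.1 - t.2.2.2, x⟫‖ := by
    calc ∫ x in Metric.ball c R, F x = ‖((∫ x in Metric.ball c R, F x : ℝ) : ℂ)‖ := by
          rw [Complex.norm_real, Real.norm_of_nonneg hFn]
      _ ≤ _ := by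
          rw [e1]
          refine (norm_sum_le _ _).trans (le_of_eq ?_)
          apply Finset.sum_congr rfl
          intro t _
          simp [hw]
  have e3 : ∀ v : E3, ‖∫ x in Metric.ball c R, ee ⟪v, x⟫‖ ≤ V := by
    intro v
    have := norm_setIntegral_le_of_norm_le_const (μ := volume) (s := Metric.ball c R)
      (f := fun x => ee ⟪v, x⟫) (C := 1) measure_ball_lt_top (fun x _ => (norm_ee _).le)
    simpa [Measure.real, hV] using this
  have e4 : ∑ t ∈ Q, w t = (∑ ξ ∈ Λ, ‖a ξ‖) ^ 4 := by
    rw [show (∑ ξ ∈ Λ, ‖a ξ‖) ^ 4 = (∑ ξ ∈ Λ, ‖a ξ‖) * ((∑ ξ ∈ Λ, ‖a ξ‖) * ((∑ ξ ∈ Λ, ‖a ξ‖) *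
      (∑ ξ ∈ Λ, ‖a ξ‖))) by ring]
    rw [Finset.sum_mul_sum, Finset.sum_mul_sum, hQ, Finset.sum_product]
    rw [Finset.sum_mul_sum]
    simp_rw [Finset.sum_product, Finset.mul_sum]
    refine Finset.sum_congr rfl fun p _ => Finset.sum_congr rfl fun q _ => Finset.sum_congr rfl fun r _ => Finset.sum_congr rfl fun s _ => ?_
    simp only [hw]
    ring
  have e5 : (∑ ξ ∈ Λ, ‖a ξ‖) ^ 4 ≤ N ^ 2 * (∑ ξ ∈ Λ, ‖a ξ‖ ^ 2) ^ 2 := by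
    have := sq_sum_le_card_mul_sum_sq (s := Λ) (f := fun ξ => ‖a ξ‖)
    calc (∑ ξ ∈ Λ, ‖a ξ‖) ^ 4 = ((∑ ξ ∈ Λ, ‖a ξ‖) ^ 2) ^ 2 := by ring
      _ ≤ (N * ∑ ξ ∈ Λ, ‖a ξ‖ ^ 2) ^ 2 := by gcongr
      _ = _ := by ring
  refine e2.trans ?_
  rw [← Finset.sum_filter_add_sum_filter_not Q (fun t => t.1 + t.2.1 = t.2.2.1 + t.2.2.2), mul_add]
  apply add_le_add
  · rw [Finset.mul_sum]
    apply Finset.sum_le_sum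
    intro t _
    rw [mul_comm V]
    exact mul_le_mul_of_nonneg_left (e3 _) (hw0 t)
  · calc _ ≤ ∑ t ∈ Q.filter (fun t => ¬ (t.1 + t.2.1 = t.2.2.1 + t.2.2.2)), w t * (η * V) := by
          apply Finset.sum_le_sum
          intro t ht
          obtain ⟨ht, hne⟩ := Finset.mem_filter.1 ht
          apply mul_le_mul_of_nonneg_left _ (hw0 t)
          apply hρ _ _ _ _ hRpos
          · intro h
            apply hne
            rw [sub_sub, sub_eq_zero] at h
            exact h
          · exact (hM _ (Finset.mem_image_of_mem _ ht)).trans hRM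
      _ ≤ ∑ t ∈ Q, w t * (η * V) := by
          apply Finset.sum_le_sum_of_subset_of_nonneg (Finset.filter_subset _ _)
          intro t _ _
          exact mul_nonneg (hw0 t) (by positivity)
      _ = (∑ ξ ∈ Λ, ‖a ξ‖) ^ 4 * (η * V) := by rw [← Finset.sum_mul, e4]
      _ ≤ (N ^ 2 * (∑ ξ ∈ Λ, ‖a ξ‖ ^ 2) ^ 2) * (η * V) := by gcongr
      _ = (η * N ^ 2) * (V * (∑ ξ ∈ Λ, ‖a ξ‖ ^ 2) ^ 2) := by ring
      _ ≤ 1 * (V * (∑ ξ ∈ Λ, ‖a ξ‖ ^ 2) ^ 2) := by gcongr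
      _ = _ := one_mul _

end analysis

section final

lemma energy_finset (A : Finset E3) (hA : ↑A ⊆ parab2) :
    (((A ×ˢ A ×ˢ A ×ˢ A).filter (fun t => t.1 + t.2.1 = t.2.2.1 + t.2.2.2)).card : ℝ) ≤
      73730 * (A.card : ℝ) ^ 2 * (Nat.log 2 A.card + 1) := by
  classical
  have h := energy_s8 (α := A) (x := fun p => (p : E3) 0) (y := fun p => (p : E3) 1) (by
    intro p q h0 h1
    have hp := hA p.2
    have hq := hA q.2
    apply Subtype.ext
    ext i
    fin_cases i
    · exact h0
    · exact h1
    · have e1 := hp.2.2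
      have e2 := hq.2.2
      simp only at h0 h1
      rw [← h0, ← h1] at e2
      exact e1.trans e2.symm)
  rw [Fintype.card_coe] at h
  refine le_trans ?_ h
  norm_cast
  apply Finset.card_le_card_of_surjOn
    (fun t : A × A × A × A => ((t.1 : E3), (t.2.1 : E3), (t.2.2.1 : E3), (t.2.2.2 : E3)))
  rintro ⟨p, q, r, s⟩ ht
  simp only [Finset.coe_filter, Finset.mem_product, Set.mem_setOf_eq] at ht
  obtain ⟨⟨hp, hq, hr, hs⟩, he⟩ := ht
  refine ⟨(⟨p, hp⟩, ⟨q, hq⟩, ⟨r, hr⟩, ⟨s, hs⟩), ?_, rfl⟩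
  have c0 : p 0 + q 0 = r 0 + s 0 := by simpa using congrArg (fun v : E3 => v 0) he
  have c1 : p 1 + q 1 = r 1 + s 1 := by simpa using congrArg (fun v : E3 => v 1) he
  have c2 : p 2 + q 2 = r 2 + s 2 := by simpa using congrArg (fun v : E3 => v 2) he
  rw [(hA hp).2.2, (hA hq).2.2, (hA hr).2.2, (hA hs).2.2] at c2
  exact Finset.mem_coe.2 (Finset.mem_filter.2 ⟨Finset.mem_univ _, ⟨c0, c1, c2⟩⟩)

/-- weighted energy -/
def wen (A : Finset E3) (a : E3 → ℂ) : ℝ :=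
  ∑ t ∈ (A ×ˢ A ×ˢ A ×ˢ A).filter (fun t => t.1 + t.2.1 = t.2.2.1 + t.2.2.2),
        ‖a t.1‖ * ‖a t.2.1‖ * ‖a t.2.2.1‖ * ‖a t.2.2.2‖

lemma wen_le (A : Finset E3) (a : E3 → ℂ) {M : ℝ} (hM : 0 ≤ M) (h : ∀ ξ ∈ A, ‖a ξ‖ ≤ M) :
    wen A a ≤ (((A ×ˢ A ×ˢ A ×ˢ A).filter
      (fun t => t.1 + t.2.1 = t.2.2.1 + t.2.2.2)).card : ℝ) * M ^ 4 := by
  unfold wen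
  rw [← nsmul_eq_mul]
  apply Finset.sum_le_card_nsmul
  intro t ht
  simp only [Finset.mem_filter, Finset.mem_product] at ht
  obtain ⟨⟨hp, hq, hr, hs⟩, -⟩ := ht
  calc _ ≤ M * M * M * M := by gcongr <;> (apply h; assumption)
    _ = M ^ 4 := by ring

lemma wen_le1 (A : Finset E3) (hA : ↑A ⊆ parab2) (a : E3 → ℂ) {M : ℝ} (hM : 0 ≤ M)
    (h : ∀ ξ ∈ A, ‖a ξ‖ ≤ M) (h2 : ∀ ξ ∈ A, M ≤ 2 * ‖a ξ‖) :
    wen A a ≤ 1179680 * (Nat.log 2 A.card + 1) * (∑ ξ ∈ A, ‖a ξ‖ ^ 2) ^ 2 := by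
  have h3 : (A.card : ℝ) * M ^ 2 ≤ 4 * ∑ ξ ∈ A, ‖a ξ‖ ^ 2 := by
    rw [← nsmul_eq_mul, Finset.mul_sum]
    apply Finset.card_nsmul_le_sum
    intro ξ hξ
    have := h2 ξ hξ
    calc M ^ 2 ≤ (2 * ‖a ξ‖) ^ 2 := by gcongr
      _ = _ := by ring
  calc wen A a ≤ _ := wen_le A a hM h
    _ ≤ (73730 * (A.card : ℝ) ^ 2 * (Nat.log 2 A.card + 1)) * M ^ 4 := by
        gcongr; exact energy_finset A hA
    _ = 73730 * (Nat.log 2 A.card + 1) * (A.card * M ^ 2) ^ 2 := by ring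
    _ ≤ 73730 * (Nat.log 2 A.card + 1) * (4 * ∑ ξ ∈ A, ‖a ξ‖ ^ 2) ^ 2 := by gcongr
    _ = _ := by ring

lemma wen_le2 (A : Finset E3) (a : E3 → ℂ) {M σ : ℝ} (hM : 0 ≤ M)
    (h : ∀ ξ ∈ A, ‖a ξ‖ ≤ M) (h2 : A.card * M ≤ σ) :
    wen A a ≤ σ ^ 4 := by
  calc wen A a ≤ _ := wen_le A a hM h
    _ ≤ ((A ×ˢ A ×ˢ A ×ˢ A).card : ℝ) * M ^ 4 := by
        gcongr; exact Finset.filter_subset _ _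
    _ = (A.card * M) ^ 4 := by
        simp only [Finset.card_product]; push_cast; ring
    _ ≤ σ ^ 4 := by gcongr

lemma avg_main_all (Λ : Finset E3) : ∃ R₀ : ℝ, 1 ≤ R₀ ∧ ∀ R, R₀ ≤ R → ∀ A ⊆ Λ,
    ∀ c : E3, ∀ a : E3 → ℂ,
    ∫ x in Metric.ball c R, ‖∑ ξ ∈ A, a ξ * ee ⟪ξ, x⟫‖ ^ 4 ≤
      (volume (Metric.ball c R)).toReal * (wen A a + (∑ ξ ∈ A, ‖a ξ‖ ^ 2) ^ 2) := by
  classical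
  choose ρ h1 hρ using avg_main
  obtain ⟨M, hM⟩ := Finset.exists_le (Λ.powerset.image ρ)
  refine ⟨max M 1, le_max_right _ _, fun R hR A hA c a => ?_⟩
  exact hρ A R ((hM _ (Finset.mem_image_of_mem _ (Finset.mem_powerset.2 hA))).trans
    ((le_max_left _ _).trans hR)) c a

lemma main_bound (Λ : Finset E3) (hΛ : ↑Λ ⊆ parab2) : ∃ R₀ : ℝ, 1 ≤ R₀ ∧ ∀ R, R₀ ≤ R →
    ∀ c : E3, ∀ a : E3 → ℂ,
    ∫ x in Metric.ball c R, ‖∑ ξ ∈ Λ, a ξ * ee ⟪ξ, x⟫‖ ^ 4 ≤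
      (volume (Metric.ball c R)).toReal *
        (1179682 * ((Nat.log 2 Λ.card : ℝ) + 2) ^ 5 * (∑ ξ ∈ Λ, ‖a ξ‖ ^ 2) ^ 2) := by
  classical
  obtain ⟨R₀, h1, hR₀⟩ := avg_main_all Λ
  refine ⟨R₀, h1, fun R hR c a => ?_⟩
  have hRpos : 0 < R := by linarith
  have hV0 := vol_pos c hRpos
  set V := (volume (Metric.ball c R)).toReal with hV
  set s := ∑ ξ ∈ Λ, ‖a ξ‖ ^ 2 with hs
  have hs0 : 0 ≤ s := Finset.sum_nonneg (fun _ _ => by positivity)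
  set σ := Real.sqrt s with hσ
  have hσ0 : 0 ≤ σ := Real.sqrt_nonneg _
  have hσ2 : σ ^ 2 = s := Real.sq_sqrt hs0
  set ℓ := Nat.log 2 Λ.card with hℓ
  set J := ℓ + 1 with hJ
  have hN : (Λ.card : ℝ) ≤ 2 ^ J := by
    have := Nat.lt_pow_succ_log_self (b := 2) (by norm_num) Λ.card
    exact_mod_cast this.le
  have hle : ∀ ξ ∈ Λ, ‖a ξ‖ ≤ σ := by
    intro ξ hξ
    apply Real.le_sqrt_of_sq_le
    exact Finset.single_le_sum (f := fun ξ => ‖a ξ‖ ^ 2) (fun _ _ => by positivity) hξ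
  set lev : E3 → ℕ := fun ξ => Nat.findGreatest (fun j => ‖a ξ‖ ≤ σ / 2 ^ j) J with hlev
  set A : ℕ → Finset E3 := fun j => Λ.filter (fun ξ => lev ξ = j) with hAdef
  have hAsub : ∀ j, A j ⊆ Λ := fun j => Finset.filter_subset _ _
  have hup : ∀ j, ∀ ξ ∈ A j, ‖a ξ‖ ≤ σ / 2 ^ j := by
    intro j ξ hξ
    obtain ⟨hξΛ, rfl⟩ := Finset.mem_filter.1 hξ
    exact Nat.findGreatest_spec (P := fun j => ‖a ξ‖ ≤ σ / 2 ^ j) (Nat.zero_le J)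
      (by simpa using hle ξ hξΛ)
  have hlow : ∀ j < J, ∀ ξ ∈ A j, σ / 2 ^ j ≤ 2 * ‖a ξ‖ := by
    intro j hj ξ hξ
    obtain ⟨hξ, rfl⟩ := Finset.mem_filter.1 hξ
    have := Nat.findGreatest_is_greatest (P := fun j => ‖a ξ‖ ≤ σ / 2 ^ j) (n := J)
      (Nat.lt_succ_self (lev ξ)) hj
    have h3 : σ / 2 ^ (lev ξ + 1) < ‖a ξ‖ := not_le.1 this
    rw [pow_succ, ← div_div] at h3
    linarith
  have hsj : ∀ j, ∑ ξ ∈ A j, ‖a ξ‖ ^ 2 ≤ s := fun j =>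
    Finset.sum_le_sum_of_subset_of_nonneg (hAsub j) (fun _ _ _ => by positivity)
  have hsj0 : ∀ j, 0 ≤ ∑ ξ ∈ A j, ‖a ξ‖ ^ 2 := fun j =>
    Finset.sum_nonneg (fun _ _ => by positivity)
  have hwen : ∀ j ∈ Finset.range (J + 1), wen (A j) a ≤ 1179680 * ((ℓ : ℝ) + 1) * s ^ 2 := by
    intro j hj
    rcases Nat.lt_or_ge j J with hjJ | hjJ
    · refine (wen_le1 (A j) (fun ξ hξ => hΛ (hAsub j hξ)) a (by positivity) (hup j)
        (hlow j hjJ)).trans ?_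
      have hlog : Nat.log 2 (A j).card ≤ ℓ := Nat.log_mono_right (Finset.card_le_card (hAsub j))
      have := hsj j
      have := hsj0 j
      gcongr
    · have hjJ : j = J := by
        have := Finset.mem_range.1 hj
        omega
      subst hjJ
      refine (wen_le2 (A J) a (σ := σ) (by positivity) (hup J) ?_).trans ?_
      · have h4 : ((A J).card : ℝ) ≤ 2 ^ J :=
          le_trans (by exact_mod_cast Finset.card_le_card (hAsub J)) hN
        calc ((A J).card : ℝ) * (σ / 2 ^ J) ≤ 2 ^ J * (σ / 2 ^ J) := by gcongr
          _ = σ := by field_simp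
      · rw [show σ ^ 4 = (σ ^ 2) ^ 2 by ring, hσ2]
        have : (0 : ℝ) ≤ ℓ := by positivity
        nlinarith [sq_nonneg s, mul_nonneg this (sq_nonneg s)]
  have hcont : ∀ B : Finset E3, Continuous (fun x : E3 => ‖∑ ξ ∈ B, a ξ * ee ⟪ξ, x⟫‖ ^ 4) := by
    intro B
    apply Continuous.pow
    apply Continuous.norm
    apply continuous_finset_sum
    intro ξ _
    exact continuous_const.mul (continuous_eev ξ)
  have hIntg : ∀ B : Finset E3, IntegrableOn (fun x : E3 => ‖∑ ξ ∈ B, a ξ * ee ⟪ξ, x⟫‖ ^ 4)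
      (Metric.ball c R) := fun B => ((hcont B).continuousOn.integrableOn_compact
      (isCompact_closedBall c R)).mono_set Metric.ball_subset_closedBall
  have hpt : ∀ x : E3, ‖∑ ξ ∈ Λ, a ξ * ee ⟪ξ, x⟫‖ ^ 4 ≤
      ((ℓ : ℝ) + 2) ^ 3 * ∑ j ∈ Finset.range (J + 1), ‖∑ ξ ∈ A j, a ξ * ee ⟪ξ, x⟫‖ ^ 4 := by
    intro x
    have e1 : ∑ ξ ∈ Λ, a ξ * ee ⟪ξ, x⟫ =
        ∑ j ∈ Finset.range (J + 1), ∑ ξ ∈ A j, a ξ * ee ⟪ξ, x⟫ := by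
      symm
      apply Finset.sum_fiberwise_of_maps_to
      intro ξ _
      rw [Finset.mem_range]
      exact Nat.lt_succ_of_le (Nat.findGreatest_le J)
    have e3 := pow_sum_div_card_le_sum_pow (s := Finset.range (J + 1))
      (f := fun j => ‖∑ ξ ∈ A j, a ξ * ee ⟪ξ, x⟫‖) (n := 3) (fun _ _ => norm_nonneg _)
    rw [Finset.card_range, div_le_iff₀ (by positivity)] at e3
    rw [e1]
    refine (pow_le_pow_left₀ (norm_nonneg _) (norm_sum_le _ _) 4).trans (e3.trans (le_of_eq ?_))
    rw [mul_comm, hJ]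
    push_cast
    ring
  calc ∫ x in Metric.ball c R, ‖∑ ξ ∈ Λ, a ξ * ee ⟪ξ, x⟫‖ ^ 4
      ≤ ∫ x in Metric.ball c R, ((ℓ : ℝ) + 2) ^ 3 *
          ∑ j ∈ Finset.range (J + 1), ‖∑ ξ ∈ A j, a ξ * ee ⟪ξ, x⟫‖ ^ 4 := by
        apply integral_mono (hIntg Λ)
        · exact Integrable.const_mul (integrable_finsetSum _ (fun j _ => hIntg (A j))) _
        · exact hpt
    _ = ((ℓ : ℝ) + 2) ^ 3 * ∑ j ∈ Finset.range (J + 1),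
          ∫ x in Metric.ball c R, ‖∑ ξ ∈ A j, a ξ * ee ⟪ξ, x⟫‖ ^ 4 := by
        rw [integral_const_mul, integral_finsetSum]
        exact fun j _ => hIntg (A j)
    _ ≤ ((ℓ : ℝ) + 2) ^ 3 * ∑ j ∈ Finset.range (J + 1),
          V * (1179682 * ((ℓ : ℝ) + 2) * s ^ 2) := by
        gcongr with j hj
        refine (hR₀ R hR (A j) (hAsub j) c a).trans ?_
        gcongr
        have h5 := hwen j hj
        have h6 : (∑ ξ ∈ A j, ‖a ξ‖ ^ 2) ^ 2 ≤ s ^ 2 := by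
          have := hsj j
          have := hsj0 j
          gcongr
        have : (0 : ℝ) ≤ ℓ := by positivity
        nlinarith [sq_nonneg s, mul_nonneg this (sq_nonneg s)]
    _ = V * (1179682 * ((ℓ : ℝ) + 2) ^ 5 * s ^ 2) := by
        rw [Finset.sum_const, Finset.card_range, nsmul_eq_mul, hJ]
        push_cast
        ring

lemma log_bound {ε : ℝ} (hε : 0 < ε) : ∃ C : ℝ, 1 ≤ C ∧ ∀ n : ℕ, 1 ≤ n →
    1179682 * ((Nat.log 2 n : ℝ) + 2) ^ 5 ≤ (C * (n : ℝ) ^ ε) ^ 4 := by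
  set δ := 4 * ε / 5 with hδ
  have hδ0 : 0 < δ := by positivity
  set D := 1 / (Real.log 2 * δ) + 2 with hD
  have hl2 : 0 < Real.log 2 := Real.log_pos (by norm_num)
  have hD2 : 2 ≤ D := by
    have : 0 ≤ 1 / (Real.log 2 * δ) := by positivity
    linarith
  have hK1 : (1 : ℝ) ≤ 1179682 * D ^ 5 := by
    have : (1 : ℝ) ≤ D ^ 5 := one_le_pow₀ (by linarith)
    linarith
  refine ⟨1179682 * D ^ 5, hK1, fun n hn => ?_⟩
  have hn1 : (1 : ℝ) ≤ n := by exact_mod_cast hn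
  have hn0 : (0 : ℝ) < n := by linarith
  have h1 : (Nat.log 2 n : ℝ) ≤ Real.log n / Real.log 2 := by
    rw [le_div_iff₀ hl2, ← Real.log_pow]
    apply Real.log_le_log (by positivity)
    exact_mod_cast Nat.pow_log_le_self 2 (by omega)
  have h2 : Real.log n ≤ (n : ℝ) ^ δ / δ := Real.log_le_rpow_div hn0.le hδ0
  have h3 : (1 : ℝ) ≤ (n : ℝ) ^ δ := Real.one_le_rpow hn1 hδ0.le
  have h4 : (Nat.log 2 n : ℝ) + 2 ≤ D * (n : ℝ) ^ δ := by
    calc (Nat.log 2 n : ℝ) + 2 ≤ ((n : ℝ) ^ δ / δ) / Real.log 2 + 2 * (n : ℝ) ^ δ := by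
          have : Real.log n / Real.log 2 ≤ ((n : ℝ) ^ δ / δ) / Real.log 2 := by gcongr
          linarith
      _ = D * (n : ℝ) ^ δ := by rw [hD]; field_simp
  have h5 : ((n : ℝ) ^ δ) ^ 5 = ((n : ℝ) ^ ε) ^ 4 := by
    rw [← Real.rpow_natCast, ← Real.rpow_natCast, ← Real.rpow_mul hn0.le, ← Real.rpow_mul hn0.le]
    congr 1
    rw [hδ]; push_cast; ring
  calc 1179682 * ((Nat.log 2 n : ℝ) + 2) ^ 5 ≤ 1179682 * (D * (n : ℝ) ^ δ) ^ 5 := by gcongr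
    _ = (1179682 * D ^ 5) * ((n : ℝ) ^ ε) ^ 4 := by rw [mul_pow, h5]; ring
    _ ≤ (1179682 * D ^ 5) ^ 4 * ((n : ℝ) ^ ε) ^ 4 := by
        gcongr
        exact le_self_pow₀ hK1 (by norm_num)
    _ = _ := by ring

end final

theorem discrete_restriction_large_R_P2 :
    ∀ ε > (0 : ℝ), ∃ C > (0 : ℝ),
      ∀ Λ : Finset (EuclideanSpace ℝ (Fin 3)), ↑Λ ⊆ parab2 →
        ∃ R₀ : ℝ, ∀ R : ℝ, R₀ ≤ R → ∀ c : EuclideanSpace ℝ (Fin 3),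
          ∀ a : EuclideanSpace ℝ (Fin 3) → ℂ,
            ((volume (Metric.ball c R)).toReal⁻¹ *
                ∫ x in Metric.ball c R, ‖∑ ξ ∈ Λ, a ξ * ee ⟪ξ, x⟫‖ ^ (4 : ℝ)) ^ (1 / 4 : ℝ) ≤
              C * (Λ.card : ℝ) ^ ε * (∑ ξ ∈ Λ, ‖a ξ‖ ^ 2) ^ (1 / 2 : ℝ) := by
  intro ε hε
  obtain ⟨C, hC1, hC⟩ := log_bound hε
  refine ⟨C, by linarith, fun Λ hΛ => ?_⟩
  obtain ⟨R₀, h1, hR₀⟩ := main_bound Λ hΛ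
  refine ⟨R₀, fun R hR c a => ?_⟩
  have hV0 := vol_pos c (show 0 < R by linarith)
  have hm := hR₀ R hR c a
  set V := (volume (Metric.ball c R)).toReal with hV
  set s := ∑ ξ ∈ Λ, ‖a ξ‖ ^ 2 with hs
  have hs0 : 0 ≤ s := Finset.sum_nonneg (fun _ _ => by positivity)
  have hpow : ∀ x : E3, ‖∑ ξ ∈ Λ, a ξ * ee ⟪ξ, x⟫‖ ^ (4 : ℝ) = ‖∑ ξ ∈ Λ, a ξ * ee ⟪ξ, x⟫‖ ^ 4 :=
    fun x => by
      have := Real.rpow_natCast ‖∑ ξ ∈ Λ, a ξ * ee ⟪ξ, x⟫‖ 4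
      exact_mod_cast this
  simp_rw [hpow]
  set I := ∫ x in Metric.ball c R, ‖∑ ξ ∈ Λ, a ξ * ee ⟪ξ, x⟫‖ ^ 4 with hI
  have hI0 : 0 ≤ I := integral_nonneg (fun x => by positivity)
  set B := C * (Λ.card : ℝ) ^ ε * s ^ (1 / 2 : ℝ) with hB
  have hB0 : 0 ≤ B := by positivity
  have hs4 : (s ^ (1 / 2 : ℝ)) ^ 4 = s ^ 2 := by
    rw [← Real.rpow_natCast, ← Real.rpow_mul hs0, ← Real.rpow_natCast]
    norm_num
  have hmain : V⁻¹ * I ≤ B ^ 4 := by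
    rw [inv_mul_le_iff₀ hV0]
    rcases Λ.eq_empty_or_nonempty with he | hne
    · have hs00 : s = 0 := by rw [hs, he]; simp
      rw [hs00] at hm
      have : I ≤ 0 := by simpa using hm
      exact this.trans (by positivity)
    · refine hm.trans ?_
      rw [hB, mul_pow _ (s ^ (1 / 2 : ℝ)), hs4]
      have := hC Λ.card (Finset.card_pos.2 hne)
      gcongr
  calc (V⁻¹ * I) ^ (1 / 4 : ℝ) ≤ (B ^ 4) ^ (1 / 4 : ℝ) := by
        apply Real.rpow_le_rpow (by positivity) hmain (by norm_num)
    _ = B := by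
        rw [← Real.rpow_natCast, ← Real.rpow_mul hB0]
        norm_num

end
end

section
/- For every ε > 0 there is a constant C_ε such that every finite set Λ ⊂ P² = {(ξ₁, ξ₂, ξ₁² + ξ₂²) : |ξ₁|, |ξ₂| ≤ 1/2} ⊂ ℝ³ satisfies E₂(Λ) ≤ C_ε · |Λ|^{2+ε}. -/
open MeasureTheory Real

noncomputable section

/-- The `k`-energy of a set `Λ`: the number of `2k`-tuples `(λ₁,…,λ₂ₖ) ∈ Λ^{2k}` with
`λ₁ + ⋯ + λ_k = λ_{k+1} + ⋯ + λ_{2k}`. -/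
def energy {E : Type*} [AddCommMonoid E] (k : ℕ) (Λ : Set E) : ℕ :=
  Nat.card {fg : (Fin k → E) × (Fin k → E) //
    (∀ i, fg.1 i ∈ Λ) ∧ (∀ i, fg.2 i ∈ Λ) ∧ ∑ i, fg.1 i = ∑ i, fg.2 i}

lemma aff_cross (m b m' b' x1 x2 : ℝ) (h1 : m*x1+b < m'*x1+b') (h2 : m'*x2+b' < m*x2+b)
    (h : x1 < x2) : ∃ x, x1 < x ∧ x < x2 ∧ m*x+b = m'*x+b' := by
  have hm : 0 < m - m' := by
    by_contra hc
    push Not at hc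
    nlinarith
  refine ⟨(b'-b)/(m-m'), ?_, ?_, ?_⟩
  · rw [lt_div_iff₀ hm]; linarith
  · rw [div_lt_iff₀ hm]; linarith
  · field_simp; ring

lemma plane_graph {ι : Type*} (V : Finset (ℝ×ℝ)) 
    (E : Finset ι) (l r : ι → ℝ×ℝ) (m b : ι → ℝ)
    (hl : ∀ e ∈ E, l e ∈ V) (hr : ∀ e ∈ E, r e ∈ V) (hlr : ∀ e ∈ E, (l e).1 < (r e).1)
    (el : ∀ e ∈ E, (l e).2 = m e * (l e).1 + b e)
    (er : ∀ e ∈ E, (r e).2 = m e * (r e).1 + b e)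
    (hV : Set.InjOn Prod.fst (V : Set (ℝ×ℝ)))
    (H2 : ∀ e ∈ E, ∀ e' ∈ E, e ≠ e' → ∀ x, (l e).1 < x → x < (r e).1 → (l e').1 < x →
      x < (r e').1 → m e * x + b e ≠ m e' * x + b e') :
    E.card ≤ 3 * V.card := by
  classical
  have inj : ∀ e ∈ E, ∀ e' ∈ E, l e = l e' → m e = m e' → e = e' := by
    intro e he e' he' h1 h2
    by_contra hne
    obtain ⟨x, hx1, hx2⟩ := exists_between (lt_min (hlr e he) (h1 ▸ hlr e' he'))
    have hb : b e = b e' := by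
      have := el e he; have := el e' he'; rw [h1, h2] at *; linarith
    rw [lt_min_iff] at hx2
    exact H2 e he e' he' hne x hx1 hx2.1 (h1 ▸ hx1) hx2.2 (by rw [h2, hb])
  set E0 := E.filter (fun e => ∀ e' ∈ E, l e' = l e → m e' ≤ m e) with hE0
  set E1 := E.filter (fun e => ¬ ∀ e' ∈ E, l e' = l e → m e' ≤ m e) with hE1
  have hcard : E.card = E0.card + E1.card := (Finset.card_filter_add_card_filter_not _).symm
  have h0 : E0.card ≤ V.card := by
    apply Finset.card_le_card_of_injOn l
    · intro e he
      exact hl e (Finset.mem_filter.1 he).1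
    · intro e he e' he' h
      have h1 := Finset.mem_filter.1 he
      have h2 := Finset.mem_filter.1 he'
      exact inj e h1.1 e' h2.1 h (le_antisymm (h2.2 e h1.1 h) (h1.2 e' h2.1 h.symm))
  -- the next edge
  have hnxt : ∀ e ∈ E1, ∃ e' ∈ E, l e' = l e ∧ m e < m e' ∧
      ∀ e'' ∈ E, l e'' = l e → m e < m e'' → m e' ≤ m e'' := by
    intro e he
    have h1 := Finset.mem_filter.1 he
    have h2 := h1.2
    push Not at h2
    obtain ⟨e1, he1, h3, h4⟩ := h2
    obtain ⟨e2, he2, h5⟩ := Finset.exists_min_image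
      (E.filter (fun e' => l e' = l e ∧ m e < m e')) m ⟨e1, by simp [he1, h3, h4]⟩
    simp only [Finset.mem_filter] at he2 h5
    exact ⟨e2, he2.1, he2.2.1, he2.2.2, fun e'' a b c => h5 e'' ⟨a, b, c⟩⟩
  choose! nx nxE nxl nxm nxmin using hnxt
  have nlt : ∀ e ∈ E1, ∀ x, (l e).1 < x → m e * x + b e < m (nx e) * x + b (nx e) := by
    intro e he x hx
    have h1 := el e (Finset.mem_filter.1 he).1
    have h2 := el (nx e) (nxE e he)
    rw [nxl e he] at h2
    have := nxm e he
    nlinarith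
  have hW : ∀ e ∈ E1, ∃ v ∈ V, ((l e).1 < v.1 ∧ v.1 ≤ (r e).1 ∧ v.1 ≤ (r (nx e)).1 ∧
      m e * v.1 + b e ≤ v.2 ∧ v.2 ≤ m (nx e) * v.1 + b (nx e)) ∧
      ∀ w ∈ V, ((l e).1 < w.1 ∧ w.1 ≤ (r e).1 ∧ w.1 ≤ (r (nx e)).1 ∧
      m e * w.1 + b e ≤ w.2 ∧ w.2 ≤ m (nx e) * w.1 + b (nx e)) → v.1 ≤ w.1 := by
    intro e he
    have heE := (Finset.mem_filter.1 he).1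
    obtain ⟨v, hv, hv2⟩ := Finset.exists_min_image
      (V.filter (fun v => (l e).1 < v.1 ∧ v.1 ≤ (r e).1 ∧ v.1 ≤ (r (nx e)).1 ∧
      m e * v.1 + b e ≤ v.2 ∧ v.2 ≤ m (nx e) * v.1 + b (nx e))) Prod.fst (by
        have q1 := er e heE
        have q2 := er _ (nxE e he)
        have q3 := hlr e heE
        have q4 := hlr _ (nxE e he)
        rw [nxl e he] at q4
        rcases le_total (r e).1 (r (nx e)).1 with h | h
        · refine ⟨r e, ?_⟩
          simp only [Finset.mem_filter]
          have := nlt e he _ q3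
          exact ⟨hr e heE, q3, le_rfl, h, q1.ge, by linarith⟩
        · refine ⟨r (nx e), ?_⟩
          simp only [Finset.mem_filter]
          have := nlt e he _ q4
          exact ⟨hr _ (nxE e he), q4, h, le_rfl, by linarith, q2.le⟩)
    simp only [Finset.mem_filter] at hv hv2
    exact ⟨v, hv.1, hv.2, fun w a b => hv2 w ⟨a, b⟩⟩
  choose! w wV wW wmin using hW
  have h1 : E1.card ≤ (V ×ˢ (Finset.univ : Finset Bool)).card := by
    apply Finset.card_le_card_of_injOn
      (fun e => (w e, decide ((w e).2 = m e * (w e).1 + b e)))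
    · intro e he
      exact Finset.mem_product.2 ⟨wV e he, Finset.mem_univ _⟩
    · -- main injectivity
      have key : ∀ e ∈ E1, ∀ f ∈ E1, w e = w f →
          ((w e).2 = m e * (w e).1 + b e ↔ (w f).2 = m f * (w f).1 + b f) →
          ¬ (l e).1 < (l f).1 := by
        intro e he f hf hw ht hlt
        have heE := (Finset.mem_filter.1 he).1
        have hfE := (Finset.mem_filter.1 hf).1
        have we := wW e he
        have wf := wW f hf
        have ne := nlt e he _ we.1
        have nf := nlt f hf _ wf.1
        rw [← hw] at wf nf ht
        have hef : e ≠ f := by rintro rfl; exact lt_irrefl _ hlt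
        have hlf : ¬ ((l e).1 < (l f).1 ∧ (l f).1 ≤ (r e).1 ∧ (l f).1 ≤ (r (nx e)).1 ∧
            m e * (l f).1 + b e ≤ (l f).2 ∧ (l f).2 ≤ m (nx e) * (l f).1 + b (nx e)) := by
          intro h
          have := wmin e he (l f) (hl f hfE) h
          linarith [wf.1]
        have hs1 : m e * (w e).1 + b e < m (nx f) * (w e).1 + b (nx f) := by
          by_cases h : (w e).2 = m e * (w e).1 + b e
          · have := ht.1 h; linarith
          · have := lt_of_le_of_ne we.2.2.2.1 (Ne.symm h); linarith [wf.2.2.2.2]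
        have hs2 : m f * (w e).1 + b f < m (nx e) * (w e).1 + b (nx e) := by
          by_cases h : (w e).2 = m e * (w e).1 + b e
          · have := ht.1 h; linarith
          · have := lt_of_le_of_ne wf.2.2.2.1 (fun h' => h (ht.2 h'.symm))
            linarith [we.2.2.2.2]
        apply hlf
        refine ⟨hlt, by linarith [wf.1], by linarith [wf.1], ?_, ?_⟩
        · by_contra hc
          push Not at hc
          have q := el _ (nxE f hf)
          rw [nxl f hf] at q
          obtain ⟨x, x1, x2, x3⟩ := aff_cross _ _ _ _ (l f).1 (w e).1 (q ▸ hc) hs1 wf.1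
          refine H2 (nx f) (nxE f hf) e heE ?_ x (by rw [nxl f hf]; exact x1) (by linarith)
            (by linarith) (by linarith) x3
          intro h
          rw [← h, nxl f hf] at hlt
          exact lt_irrefl _ hlt
        · by_contra hc
          push Not at hc
          have q := el f hfE
          obtain ⟨x, x1, x2, x3⟩ := aff_cross _ _ _ _ (l f).1 (w e).1 (q ▸ hc) hs2 wf.1
          refine H2 (nx e) (nxE e he) f hfE ?_ x (by rw [nxl e he]; linarith) (by linarith)
            (by linarith) (by linarith) x3
          intro h
          rw [← h, nxl e he] at hlt
          exact lt_irrefl _ hlt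
      have key2 : ∀ e ∈ E1, ∀ f ∈ E1, w e = w f →
          ((w e).2 = m e * (w e).1 + b e ↔ (w f).2 = m f * (w f).1 + b f) →
          l e = l f → ¬ m e < m f := by
        intro e he f hf hw ht hll hlt
        have heE := (Finset.mem_filter.1 he).1
        have hfE := (Finset.mem_filter.1 hf).1
        have we := wW e he
        have wf := wW f hf
        have ne := nlt e he _ we.1
        rw [← hw] at wf ht
        have h1 := nxmin e he f hfE hll.symm hlt
        have q1 := el _ (nxE e he)
        have q2 := el f hfE
        rw [nxl e he] at q1
        rw [← hll] at q2
        have h2 : m (nx e) * (w e).1 + b (nx e) ≤ m f * (w e).1 + b f := by nlinarith [we.1]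
        have h3 : (w e).2 = m f * (w e).1 + b f := by linarith [we.2.2.2.2, wf.2.2.2.1]
        have h4 := ht.2 h3
        linarith [wf.2.2.2.1]
      intro e he f hf hef
      simp only [Prod.mk.injEq, decide_eq_decide] at hef
      have heE := (Finset.mem_filter.1 he).1
      have hfE := (Finset.mem_filter.1 hf).1
      have hx : (l e).1 = (l f).1 := le_antisymm
        (not_lt.1 (key f hf e he hef.1.symm hef.2.symm)) (not_lt.1 (key e he f hf hef.1 hef.2))
      have hL : l e = l f := hV (hl e heE) (hl f hfE) hx
      refine inj e heE f hfE hL (le_antisymm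
        (not_lt.1 (key2 f hf e he hef.1.symm hef.2.symm hL.symm))
        (not_lt.1 (key2 e he f hf hef.1 hef.2 hL)))
  rw [Finset.card_product] at h1
  simp at h1
  omega

lemma count_col_s9 {α : Type*} [DecidableEq α] (P A : Finset α) (hA : A ⊆ P) (n : ℕ) :
    (Finset.univ.filter (fun c : P → Fin (n+1) => ∀ p ∈ A, ∃ h : p ∈ P, c ⟨p, h⟩ = 0)).card
      * (n+1)^A.card = (n+1)^P.card := by
  have h : (Finset.univ.filter (fun c : P → Fin (n+1) => ∀ p ∈ A, ∃ h : p ∈ P, c ⟨p, h⟩ = 0))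
      = Fintype.piFinset (fun i : P => if i.1 ∈ A then {0} else Finset.univ) := by
    ext c
    simp only [Finset.mem_filter, Finset.mem_univ, true_and, Fintype.mem_piFinset]
    constructor
    · intro h i
      split_ifs with hi
      · obtain ⟨_, h2⟩ := h i.1 hi
        simpa using h2
      · simp
    · intro h p hp
      refine ⟨hA hp, ?_⟩
      have := h ⟨p, hA hp⟩
      simpa [hp] using this
  rw [h, Fintype.card_piFinset]
  have h2 : ∀ i : P, (if i.1 ∈ A then ({0} : Finset (Fin (n+1))) else Finset.univ).card
      = (fun j : α => if j ∈ A then 1 else (n+1)) i.1 := by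
    intro i
    by_cases hi : i.1 ∈ A <;> simp [hi]
  rw [Finset.prod_congr rfl (fun i _ => h2 i)]
  rw [Finset.prod_coe_sort P (fun j : α => if j ∈ A then 1 else (n+1))]
  rw [Finset.prod_ite]
  simp only [Finset.prod_const_one, one_mul, Finset.prod_const]
  rw [← pow_add]
  congr 1
  have : P.filter (fun x => x ∉ A) = P \ A := by ext; simp
  rw [this]
  exact Finset.card_sdiff_add_card_eq_card hA

def OnL (p l : ℝ×ℝ) : Prop := p.2 = l.1 * p.1 + l.2

open Classical in
lemma szTr (P L : Finset (ℝ×ℝ)) (hP : Set.InjOn Prod.fst (P : Set (ℝ×ℝ))) (n : ℕ) :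
    ((P ×ˢ L).filter (fun e => OnL e.1 e.2)).card * (n+1)^2
      ≤ L.card * (n+1)^2 + 3 * P.card * (n+1)^3 + L.card^2 := by
  set J := (P ×ˢ L).filter (fun e => OnL e.1 e.2 ∧ ∃ q ∈ P, OnL q e.2 ∧ e.1.1 < q.1) with hJ
  have hJm : ∀ e, e ∈ J ↔ (e.1 ∈ P ∧ e.2 ∈ L) ∧ OnL e.1 e.2 ∧
      ∃ q ∈ P, OnL q e.2 ∧ e.1.1 < q.1 := by
    intro e; rw [hJ, Finset.mem_filter, Finset.mem_product]
  have hI : ((P ×ˢ L).filter (fun e => OnL e.1 e.2)).card ≤ J.card + L.card := by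
    have : ((P ×ˢ L).filter (fun e => OnL e.1 e.2)) ⊆ J ∪
        (P ×ˢ L).filter (fun e => OnL e.1 e.2 ∧ ¬ ∃ q ∈ P, OnL q e.2 ∧ e.1.1 < q.1) := by
      intro e he
      rw [Finset.mem_filter] at he
      rw [Finset.mem_union, hJ, Finset.mem_filter, Finset.mem_filter]
      by_cases h : ∃ q ∈ P, OnL q e.2 ∧ e.1.1 < q.1
      · exact Or.inl ⟨he.1, he.2, h⟩
      · exact Or.inr ⟨he.1, he.2, h⟩
    refine (Finset.card_le_card this).trans ((Finset.card_union_le _ _).trans ?_)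
    gcongr
    apply Finset.card_le_card_of_injOn Prod.snd
    · intro e he
      have he := (Finset.mem_filter.1 he).1
      exact (Finset.mem_product.1 he).2
    · intro e he f hf hef
      have he := Finset.mem_filter.1 he
      have hf := Finset.mem_filter.1 hf
      have he1 := Finset.mem_product.1 he.1
      have hf1 := Finset.mem_product.1 hf.1
      refine Prod.ext (hP he1.1 hf1.1 ?_) hef
      apply le_antisymm
      · by_contra hc
        push Not at hc
        exact hf.2.2 ⟨e.1, he1.1, hef ▸ he.2.1, hc⟩
      · by_contra hc
        push Not at hc
        exact he.2.2 ⟨f.1, hf1.1, hef ▸ hf.2.1, hc⟩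
  have hs : ∀ e ∈ J, ∃ q ∈ P, OnL q e.2 ∧ e.1.1 < q.1 ∧
      ∀ q' ∈ P, OnL q' e.2 → e.1.1 < q'.1 → q.1 ≤ q'.1 := by
    intro e he
    obtain ⟨q, hq, h1, h2⟩ := ((hJm e).1 he).2.2
    obtain ⟨q0, hq0, h⟩ := Finset.exists_min_image
      (P.filter (fun q => OnL q e.2 ∧ e.1.1 < q.1)) Prod.fst ⟨q, by simp [hq, h1, h2]⟩
    simp only [Finset.mem_filter] at hq0 h
    exact ⟨q0, hq0.1, hq0.2.1, hq0.2.2, fun q' a b c => h q' ⟨a, b, c⟩⟩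
  choose! s sP sL slt smin using hs
  have jP : ∀ e ∈ J, e.1 ∈ P := fun e he => ((hJm e).1 he).1.1
  have jL : ∀ e ∈ J, e.2 ∈ L := fun e he => ((hJm e).1 he).1.2
  have jO : ∀ e ∈ J, OnL e.1 e.2 := fun e he => ((hJm e).1 he).2.1
  -- same line edges do not overlap
  have same : ∀ e ∈ J, ∀ f ∈ J, e.2 = f.2 → ∀ x, e.1.1 < x → x < (s e).1 → f.1.1 < x →
      x < (s f).1 → e = f := by
    intro e he f hf h x h1 h2 h3 h4
    refine Prod.ext (hP (jP e he) (jP f hf) ?_) h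
    apply le_antisymm
    · by_contra hc
      push Not at hc
      have := smin f hf e.1 (jP e he) (h ▸ jO e he) hc
      linarith
    · by_contra hc
      push Not at hc
      have := smin e he f.1 (jP f hf) (h ▸ jO f hf) hc
      linarith
  set X := (J ×ˢ J).filter (fun z => z.1 ≠ z.2 ∧ ∃ x, z.1.1.1 < x ∧ x < (s z.1).1 ∧
    z.2.1.1 < x ∧ x < (s z.2).1 ∧ z.1.2.1 * x + z.1.2.2 = z.2.2.1 * x + z.2.2.2) with hX
  have hXm : ∀ z, z ∈ X ↔ (z.1 ∈ J ∧ z.2 ∈ J) ∧ z.1 ≠ z.2 ∧ ∃ x, z.1.1.1 < x ∧ x < (s z.1).1 ∧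
    z.2.1.1 < x ∧ x < (s z.2).1 ∧ z.1.2.1 * x + z.1.2.2 = z.2.2.1 * x + z.2.2.2 := by
    intro e; rw [hX, Finset.mem_filter, Finset.mem_product]
  have line_eq : ∀ k l : ℝ × ℝ, ∀ x y : ℝ, x ≠ y → k.1 * x + k.2 = l.1 * x + l.2 →
      k.1 * y + k.2 = l.1 * y + l.2 → k = l := by
    intro k l x y hxy h1 h2
    have : (k.1 - l.1) * (x - y) = 0 := by linarith
    have h3 : k.1 = l.1 := by
      rcases mul_eq_zero.1 this with h | h
      · linarith
      · exact absurd (by linarith) hxy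
    exact Prod.ext h3 (by rw [h3] at h1; linarith)
  have hXcard : X.card ≤ L.card^2 := by
    rw [sq, ← Finset.card_product]
    apply Finset.card_le_card_of_injOn (fun z => (z.1.2, z.2.2))
    · intro z hz
      have hz := (hXm z).1 hz
      exact Finset.mem_product.2 ⟨jL z.1 hz.1.1, jL z.2 hz.1.2⟩
    · intro z hz y hy hzy
      obtain ⟨⟨z1, z2⟩, hz3, x, a1, a2, a3, a4, a5⟩ := (hXm z).1 hz
      obtain ⟨⟨y1, y2⟩, hy3, x', b1, b2, b3, b4, b5⟩ := (hXm y).1 hy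
      simp only [Prod.mk.injEq] at hzy
      have hxx : x = x' := by
        by_contra hne
        rw [← hzy.1, ← hzy.2] at b5
        have := line_eq _ _ x x' hne a5 b5
        exact hz3 (same _ z1 _ z2 this x a1 a2 a3 a4)
      subst hxx
      exact Prod.ext (same _ z1 _ y1 hzy.1 x a1 a2 b1 b2) (same _ z2 _ y2 hzy.2 x a3 a4 b3 b4)
  let G : (P → Fin (n+1)) → ℝ × ℝ → Prop := fun c p => ∃ h : p ∈ P, c ⟨p, h⟩ = 0
  have main : ∀ c : P → Fin (n+1), (J.filter (fun e => ∀ p ∈ ({e.1, s e} : Finset (ℝ×ℝ)), G c p)).card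
      ≤ 3 * (P.filter (fun p => ∀ q ∈ ({p} : Finset (ℝ×ℝ)), G c q)).card + 
        (X.filter (fun z => ∀ p ∈ ({z.1.1, s z.1, z.2.1, s z.2} : Finset (ℝ×ℝ)), G c p)).card := by
    intro c
    set S := P.filter (fun p => ∀ q ∈ ({p} : Finset (ℝ×ℝ)), G c q) with hS
    set F := J.filter (fun e => ∀ p ∈ ({e.1, s e} : Finset (ℝ×ℝ)), G c p) with hF
    set Y := X.filter (fun z => ∀ p ∈ ({z.1.1, s z.1, z.2.1, s z.2} : Finset (ℝ×ℝ)), G c p) with hY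
    have hFm : ∀ e, e ∈ F ↔ e ∈ J ∧ G c e.1 ∧ G c (s e) := by
      intro e; simp [hF]
    have hSm : ∀ e, e ∈ S ↔ e ∈ P ∧ G c e := by
      intro e; simp [hS]
    have h1 : (F \ Y.image Prod.fst).card ≤ 3 * S.card := by
      apply plane_graph S _ (fun e => e.1) s (fun e => e.2.1) (fun e => e.2.2)
      · intro e he
        have := (hFm e).1 (Finset.mem_sdiff.1 he).1
        exact (hSm _).2 ⟨jP e this.1, this.2.1⟩
      · intro e he
        have := (hFm e).1 (Finset.mem_sdiff.1 he).1
        exact (hSm _).2 ⟨sP e this.1, this.2.2⟩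
      · intro e he
        have := (hFm e).1 (Finset.mem_sdiff.1 he).1
        exact slt e this.1
      · intro e he
        have := (hFm e).1 (Finset.mem_sdiff.1 he).1
        exact jO e this.1
      · intro e he
        have := (hFm e).1 (Finset.mem_sdiff.1 he).1
        exact sL e this.1
      · exact hP.mono (by intro x hx; exact ((hSm x).1 hx).1)
      · intro e he f hf hef x x1 x2 x3 x4 x5
        have he1 := (hFm e).1 (Finset.mem_sdiff.1 he).1
        have hf1 := (hFm f).1 (Finset.mem_sdiff.1 hf).1
        apply (Finset.mem_sdiff.1 he).2
        refine Finset.mem_image.2 ⟨(e, f), ?_, rfl⟩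
        rw [hY, Finset.mem_filter, hXm]
        refine ⟨⟨⟨he1.1, hf1.1⟩, hef, x, x1, x2, x3, x4, x5⟩, ?_⟩
        simp [he1.2, hf1.2]
    have h2 := Finset.card_le_card_sdiff_add_card (s := F) (t := Y.image Prod.fst)
    have h3 := Finset.card_image_le (s := Y) (f := Prod.fst)
    omega
  have swap : ∀ {β : Type} (T : Finset β) (A : β → Finset (ℝ×ℝ)) (a : ℕ), (∀ z ∈ T, A z ⊆ P) →
      (∀ z ∈ T, (A z).card = a) → 
      (∑ c : P → Fin (n+1), (T.filter (fun z => ∀ p ∈ A z, G c p)).card) * (n+1)^a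
        = T.card * (n+1)^P.card := by
    intro β T A a h1 h2
    simp only [Finset.card_filter]
    rw [Finset.sum_comm, Finset.sum_mul, Finset.card_eq_sum_ones, Finset.sum_mul]
    apply Finset.sum_congr rfl
    intro z hz
    rw [← Finset.card_filter, ← h2 z hz, one_mul]
    exact count_col_s9 P (A z) (h1 z hz) n
  have s1 := swap J (fun e => {e.1, s e}) 2 (by
    intro e he p hp
    simp only [Finset.mem_insert, Finset.mem_singleton] at hp
    rcases hp with rfl | rfl
    · exact jP e he
    · exact sP e he) (by
    intro e he
    apply Finset.card_pair
    intro h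
    have := slt e he
    rw [← h] at this
    exact lt_irrefl _ this)
  have s2 := swap P (fun e => {e}) 1 (by
    intro e he p hp
    simp only [Finset.mem_singleton] at hp
    rwa [hp]) (by
    intro e he
    simp)
  have s3 := swap X (fun z => {z.1.1, s z.1, z.2.1, s z.2}) 4 (by
    intro z hz p hp
    have hz := (hXm z).1 hz
    simp only [Finset.mem_insert, Finset.mem_singleton] at hp
    rcases hp with rfl | rfl | rfl | rfl
    · exact jP _ hz.1.1
    · exact sP _ hz.1.1
    · exact jP _ hz.1.2
    · exact sP _ hz.1.2) (by
    intro z hz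
    obtain ⟨⟨z1, z2⟩, hz3, x, a1, a2, a3, a4, a5⟩ := (hXm z).1 hz
    have o1 := jO _ z1
    have o2 := jO _ z2
    have o3 := sL _ z1
    have o4 := sL _ z2
    have hne : z.1.2 ≠ z.2.2 := fun h => hz3 (same _ z1 _ z2 h x a1 a2 a3 a4)
    have d1 : z.1.1 ≠ s z.1 := fun h => by rw [← h] at a2; linarith
    have d2 : z.1.1 ≠ z.2.1 := fun h => by
      unfold OnL at o1 o2
      rw [← h] at o2
      exact hne (line_eq _ _ _ _ a1.ne (o1.symm.trans o2) a5)
    have d3 : z.1.1 ≠ s z.2 := fun h => by rw [← h] at a4; linarith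
    have d4 : s z.1 ≠ z.2.1 := fun h => by rw [← h] at a3; linarith
    have d5 : s z.1 ≠ s z.2 := fun h => by
      unfold OnL at o3 o4
      rw [← h] at o4
      exact hne (line_eq _ _ _ _ a2.ne' (o3.symm.trans o4) a5)
    have d6 : z.2.1 ≠ s z.2 := fun h => by rw [← h] at a4; linarith
    rw [Finset.card_insert_of_notMem (by simp [d1, d2, d3]),
      Finset.card_insert_of_notMem (by simp [d4, d5]), Finset.card_pair d6])
  have hsum := Finset.sum_le_sum (fun c (_ : c ∈ (Finset.univ : Finset (P → Fin (n+1)))) => main c)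
  rw [Finset.sum_add_distrib, ← Finset.mul_sum] at hsum
  set σ1 := ∑ c : P → Fin (n+1), (J.filter (fun e => ∀ p ∈ ({e.1, s e} : Finset (ℝ×ℝ)), G c p)).card
  set σ2 := ∑ c : P → Fin (n+1), (P.filter (fun p => ∀ q ∈ ({p} : Finset (ℝ×ℝ)), G c q)).card
  set σ3 := ∑ c : P → Fin (n+1), (X.filter (fun z => ∀ p ∈ ({z.1.1, s z.1, z.2.1, s z.2} : Finset (ℝ×ℝ)), G c p)).card
  have hfin : J.card * (n+1)^2 ≤ 3 * P.card * (n+1)^3 + X.card := by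
    have hpos : 0 < (n+1)^P.card := by positivity
    refine Nat.le_of_mul_le_mul_right ?_ hpos
    calc J.card * (n+1)^2 * (n+1)^P.card = σ1 * (n+1)^2 * (n+1)^2 := by rw [s1]; ring
      _ ≤ (3 * σ2 + σ3) * (n+1)^2 * (n+1)^2 := by gcongr
      _ = 3 * (σ2 * (n+1)^1) * (n+1)^3 + σ3 * (n+1)^4 := by ring
      _ = _ := by rw [s2, s3]; ring
  calc _ ≤ (J.card + L.card) * (n+1)^2 := by gcongr
    _ = J.card * (n+1)^2 + L.card * (n+1)^2 := by ring
    _ ≤ _ := by omega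

def lineOf (a c : ℝ×ℝ) : ℝ×ℝ :=
  ((c.2-a.2)/(c.1-a.1), a.2 - (c.2-a.2)/(c.1-a.1) * a.1)

lemma onL_left (a c : ℝ×ℝ) : OnL a (lineOf a c) := by
  unfold OnL lineOf; simp

lemma onL_right (a c : ℝ×ℝ) (h : a.1 ≠ c.1) : OnL c (lineOf a c) := by
  unfold OnL lineOf
  have : c.1 - a.1 ≠ 0 := fun h' => h (by linarith)
  field_simp
  ring

open Classical in
def nn (P : Finset (ℝ×ℝ)) (l : ℝ×ℝ) : ℕ := (P.filter (fun p => OnL p l)).card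

lemma opt_aux (N k L : ℕ) (hk : 1 ≤ k)
    (h : ∀ n : ℕ, k * L * (n+1)^2 ≤ 6 * N * (n+1)^3 + 2 * L^2) :
    L * k^3 ≤ 1296 * N^2 ∨ k * L ≤ 36 * N := by
  rcases Nat.eq_zero_or_pos L with h0 | hL
  · left; simp [h0]
  have hkr : (1:ℝ) ≤ k := by exact_mod_cast hk
  have hLr : (1:ℝ) ≤ L := by exact_mod_cast hL
  have hNr : (0:ℝ) ≤ N := Nat.cast_nonneg _
  set q : ℝ := √((L:ℝ)/k) with hq
  have hq0 : 0 < q := Real.sqrt_pos.2 (by positivity)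
  have hqq : k * q^2 = L := by
    rw [hq, Real.sq_sqrt (by positivity)]; field_simp
  set n := ⌈2*q⌉₊ - 1 with hn
  have hc : 0 < ⌈2*q⌉₊ := Nat.ceil_pos.2 (by positivity)
  have hn1 : n + 1 = ⌈2*q⌉₊ := by omega
  have ht1 : 2*q ≤ ((n+1 : ℕ):ℝ) := by rw [hn1]; exact Nat.le_ceil _
  have ht2 : ((n+1 : ℕ):ℝ) < 2*q+1 := by rw [hn1]; exact Nat.ceil_lt_add_one (by positivity)
  have hh : (k:ℝ) * L * ((n+1:ℕ):ℝ)^2 ≤ 6 * N * ((n+1:ℕ):ℝ)^3 + 2 * (L:ℝ)^2 := by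
    exact_mod_cast h n
  set t : ℝ := ((n+1:ℕ):ℝ)
  have htp : 0 < t := by linarith
  have h4 : 4 * (L:ℝ) ≤ k * t^2 := by
    rw [← hqq]
    have : (2*q)^2 ≤ t^2 := by gcongr
    nlinarith
  have h5 : (k:ℝ) * L * t^2 ≤ 12 * N * t * t^2 := by nlinarith
  have h6 : (k:ℝ) * L ≤ 12 * N * t := le_of_mul_le_mul_right h5 (by positivity)
  rcases le_total k L with hkL | hkL
  · left
    have hkLr : (k:ℝ) ≤ L := by exact_mod_cast hkL
    have hq1 : 1 ≤ q := by
      rw [hq]; apply Real.one_le_sqrt.2; rw [le_div_iff₀ (by positivity)]; linarith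
    have h7 : (k:ℝ) * L ≤ 36 * N * q := by nlinarith
    have h8 : ((k:ℝ) * L)^2 ≤ (36 * N * q)^2 := by gcongr
    have h9 : (L:ℝ) * k^3 * L ≤ 1296 * N^2 * L := by
      calc (L:ℝ) * k^3 * L = ((k:ℝ) * L)^2 * k := by ring
        _ ≤ (36 * N * q)^2 * k := by gcongr
        _ = 1296 * N^2 * (k * q^2) := by ring
        _ = _ := by rw [hqq]
    have := le_of_mul_le_mul_right h9 (by positivity)
    exact_mod_cast this
  · right
    have hkLr : (L:ℝ) ≤ k := by exact_mod_cast hkL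
    have hq1 : q ≤ 1 := by
      rw [hq]; refine Real.sqrt_le_iff.2 ⟨zero_le_one, ?_⟩; rw [div_le_iff₀ (by positivity)]; linarith
    have h7 : (k:ℝ) * L ≤ 36 * N := by nlinarith
    exact_mod_cast h7

lemma inc_eq_sum (P L : Finset (ℝ×ℝ)) [DecidablePred (fun e : (ℝ×ℝ)×(ℝ×ℝ) => OnL e.1 e.2)] :
    ((P ×ˢ L).filter (fun e => OnL e.1 e.2)).card = ∑ l ∈ L, nn P l := by
  classical
  unfold nn
  rw [Finset.card_filter, Finset.sum_product_right]
  apply Finset.sum_congr rfl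
  intro l _
  rw [Finset.card_filter]
  apply Finset.sum_congr rfl
  intro p _
  congr

lemma rich (P L : Finset (ℝ×ℝ)) (hP : Set.InjOn Prod.fst (P : Set (ℝ×ℝ)))
    (h2 : ∀ l ∈ L, 2 ≤ nn P l) (n : ℕ) :
    (∑ l ∈ L, nn P l) * (n+1)^2 ≤ 6 * P.card * (n+1)^3 + 2 * L.card^2 := by
  classical
  have h := szTr P L hP n
  rw [inc_eq_sum] at h
  have h3 : L.card * 2 ≤ ∑ l ∈ L, nn P l := by
    rw [← smul_eq_mul]; exact Finset.card_nsmul_le_sum _ _ _ h2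
  nlinarith [Nat.mul_le_mul_right ((n+1)^2) h3]

lemma rich_k (P L : Finset (ℝ×ℝ)) (hP : Set.InjOn Prod.fst (P : Set (ℝ×ℝ)))
    (h2 : ∀ l ∈ L, 2 ≤ nn P l) (k : ℕ) (hk : 1 ≤ k) (hkL : ∀ l ∈ L, k ≤ nn P l) :
    L.card * k^3 ≤ 1296 * P.card^2 ∨ k * L.card ≤ 36 * P.card := by
  apply opt_aux _ _ _ hk
  intro n
  refine le_trans ?_ (rich P L hP h2 n)
  gcongr
  rw [mul_comm, ← smul_eq_mul]; exact Finset.card_nsmul_le_sum _ _ _ hkL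

lemma cube_le (n : ℕ) : n^3 ≤ ∑ k ∈ Finset.Icc 1 n, 3 * k^2 := by
  induction n with
  | zero => simp
  | succ n ih =>
    rw [Finset.sum_Icc_succ_top (by omega)]
    have : n^3 + 3*(n+1)^2 = (n+1)^3 + (3*n+2) := by ring
    linarith

lemma poor_sum (P L : Finset (ℝ×ℝ)) (hP : Set.InjOn Prod.fst (P : Set (ℝ×ℝ)))
    (h2 : ∀ l ∈ L, 2 ≤ nn P l) (hs : ∀ l ∈ L, nn P l ≤ Nat.sqrt P.card) :
    ((∑ l ∈ L, (nn P l)^3 : ℕ) : ℝ) ≤ 3888 * (P.card:ℝ)^2 * (1 + Real.log P.card) := by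
  classical
  set N := P.card with hN
  set s := Nat.sqrt N with hsdef
  have h1 : ∑ l ∈ L, (nn P l)^3 ≤
      ∑ k ∈ Finset.Icc 1 s, 3 * k^2 * (L.filter (fun l => k ≤ nn P l)).card := by
    calc ∑ l ∈ L, (nn P l)^3 
        ≤ ∑ l ∈ L, ∑ k ∈ Finset.Icc 1 s, (if k ≤ nn P l then 3 * k^2 else 0) := by
          apply Finset.sum_le_sum
          intro l hl
          rw [← Finset.sum_filter]
          refine (cube_le _).trans ?_
          apply Finset.sum_le_sum_of_subset
          intro k hk
          have := hs l hl
          simp only [Finset.mem_Icc, Finset.mem_filter] at *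
          omega
      _ = _ := by
          rw [Finset.sum_comm]
          apply Finset.sum_congr rfl
          intro k _
          rw [← Finset.sum_filter, Finset.sum_const, smul_eq_mul, mul_comm]
  have h3 : ∀ k ∈ Finset.Icc 1 s, ((3 * k^2 * (L.filter (fun l => k ≤ nn P l)).card : ℕ):ℝ)
      ≤ 3888 * (N:ℝ)^2 * ((k:ℝ)⁻¹) := by
    intro k hk
    rw [Finset.mem_Icc] at hk
    set M := (L.filter (fun l => k ≤ nn P l)).card with hM
    have hks : k * k ≤ N := Nat.le_sqrt.1 hk.2
    have : M * k^3 ≤ 1296 * N^2 := by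
      rcases rich_k P (L.filter (fun l => k ≤ nn P l)) hP
        (fun l hl => h2 l (Finset.mem_filter.1 hl).1) k hk.1
        (fun l hl => (Finset.mem_filter.1 hl).2) with h | h
      · exact h
      · calc M * k^3 = k * M * (k * k) := by ring
          _ ≤ 36 * N * N := by gcongr
          _ ≤ _ := by nlinarith [Nat.zero_le (N^2)]
    have hr : (M:ℝ) * k^3 ≤ 1296 * (N:ℝ)^2 := by exact_mod_cast this
    have hk0 : (0:ℝ) < k := by exact_mod_cast hk.1
    rw [← div_eq_mul_inv, le_div_iff₀ hk0]
    push_cast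
    nlinarith
  have h4 : ∑ k ∈ Finset.Icc 1 s, ((k:ℝ)⁻¹) ≤ 1 + Real.log N := by
    have := harmonic_le_one_add_log s
    rw [harmonic_eq_sum_Icc] at this
    push_cast at this
    refine this.trans ?_
    rcases Nat.eq_zero_or_pos s with h0 | h0
    · rw [h0]; simp; positivity
    · gcongr
      exact Nat.sqrt_le_self N
  calc ((∑ l ∈ L, (nn P l)^3 : ℕ) : ℝ) 
      ≤ ((∑ k ∈ Finset.Icc 1 s, 3 * k^2 * (L.filter (fun l => k ≤ nn P l)).card : ℕ):ℝ) := by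
        exact_mod_cast h1
    _ = ∑ k ∈ Finset.Icc 1 s, ((3 * k^2 * (L.filter (fun l => k ≤ nn P l)).card : ℕ):ℝ) := by
        push_cast; rfl
    _ ≤ ∑ k ∈ Finset.Icc 1 s, 3888 * (N:ℝ)^2 * ((k:ℝ)⁻¹) := Finset.sum_le_sum h3
    _ = 3888 * (N:ℝ)^2 * ∑ k ∈ Finset.Icc 1 s, ((k:ℝ)⁻¹) := by rw [Finset.mul_sum]
    _ ≤ _ := by gcongr

lemma rich_sum (P L : Finset (ℝ×ℝ)) (hP : Set.InjOn Prod.fst (P : Set (ℝ×ℝ)))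
    (h2 : ∀ l ∈ L, 2 ≤ nn P l) (hs : ∀ l ∈ L, Nat.sqrt P.card < nn P l) :
    ∑ l ∈ L, nn P l ≤ 3359238 * P.card := by
  set N := P.card with hN
  set k := Nat.sqrt N + 1 with hk
  have hkk : N < k * k := Nat.lt_succ_sqrt N
  have h3 : k * L.card ≤ 1296 * N := by
    rcases rich_k P L hP h2 k (by omega) (fun l hl => hs l hl) with h | h
    · rw [← hN] at h
      have h5 : k * L.card * (k * k) ≤ 1296 * N * (k * k) := by
        calc k * L.card * (k*k) = L.card * k^3 := by ring
          _ ≤ 1296 * N^2 := h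
          _ = 1296 * N * N := by ring
          _ ≤ _ := by gcongr
      exact Nat.le_of_mul_le_mul_right h5 (by positivity)
    · omega
  have h4 : L.card^2 ≤ 1296^2 * N := by
    have h5 : L.card^2 * (k * k) ≤ 1296^2 * N * (k*k) := by
      calc L.card^2 * (k * k) = (k * L.card)^2 := by ring
        _ ≤ (1296 * N)^2 := by gcongr
        _ = 1296^2 * N * N := by ring
        _ ≤ _ := by gcongr
    exact Nat.le_of_mul_le_mul_right h5 (by positivity)
  have := rich P L hP h2 0
  norm_num at this h4
  omega

def Perp (a c d : ℝ×ℝ) : Prop := (c.1-a.1)*(d.1-a.1) + (c.2-a.2)*(d.2-a.2) = 0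

lemma lineOf_unique (a c k : ℝ×ℝ) (h : a.1 ≠ c.1) (ha : OnL a k) (hc : OnL c k) :
    k = lineOf a c := by
  unfold OnL at *
  have h0 : c.1 - a.1 ≠ 0 := fun h' => h (by linarith)
  have h1 : k.1 = (c.2-a.2)/(c.1-a.1) := by
    rw [eq_div_iff h0, ha, hc]; ring
  apply Prod.ext
  · exact h1
  · unfold lineOf; simp only; rw [← h1]; linarith

open Classical in
lemma tri_inj (P : Finset (ℝ×ℝ)) (hP : Set.InjOn Prod.fst (P : Set (ℝ×ℝ))) :
    (((P ×ˢ P ×ˢ P).filter (fun z => z.1 ≠ z.2.1 ∧ z.1 ≠ z.2.2 ∧ Perp z.1 z.2.1 z.2.2)).card : ℝ)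
      ≤ 10^7 * (P.card:ℝ)^2 * (1 + Real.log P.card) := by
  set T := (P ×ˢ P ×ˢ P).filter (fun z => z.1 ≠ z.2.1 ∧ z.1 ≠ z.2.2 ∧ Perp z.1 z.2.1 z.2.2)
    with hT
  have hTm : ∀ z, z ∈ T ↔ (z.1 ∈ P ∧ z.2.1 ∈ P ∧ z.2.2 ∈ P) ∧ z.1 ≠ z.2.1 ∧ z.1 ≠ z.2.2 ∧
      Perp z.1 z.2.1 z.2.2 := by
    intro z; rw [hT, Finset.mem_filter, Finset.mem_product, Finset.mem_product]
  have hne : ∀ a ∈ P, ∀ c ∈ P, a ≠ c → a.1 ≠ c.1 := fun a ha c hc h h' => h (hP ha hc h')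
  set s := Nat.sqrt P.card with hs
  set LL := P.offDiag.image (fun z => lineOf z.1 z.2) with hLL
  have hLLm : ∀ a ∈ P, ∀ c ∈ P, a ≠ c → lineOf a c ∈ LL := by
    intro a ha c hc h
    exact Finset.mem_image.2 ⟨(a, c), Finset.mem_offDiag.2 ⟨ha, hc, h⟩, rfl⟩
  have hLL2 : ∀ l ∈ LL, 2 ≤ nn P l := by
    intro l hl
    obtain ⟨⟨a, c⟩, hz, rfl⟩ := Finset.mem_image.1 hl
    obtain ⟨ha, hc, h⟩ := Finset.mem_offDiag.1 hz
    simp only at *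
    rw [← Finset.card_pair h]
    apply Finset.card_le_card
    intro p hp
    simp only [Finset.mem_insert, Finset.mem_singleton] at hp
    rcases hp with rfl | rfl
    · exact Finset.mem_filter.2 ⟨ha, onL_left _ _⟩
    · exact Finset.mem_filter.2 ⟨hc, onL_right _ _ (hne _ ha _ hc h)⟩
  set Lr := LL.filter (fun l => s < nn P l) with hLr
  set Lp := LL.filter (fun l => nn P l ≤ s) with hLp
  set Tr := T.filter (fun z => s < nn P (lineOf z.1 z.2.1)) with hTr
  set Tp := T.filter (fun z => nn P (lineOf z.1 z.2.1) ≤ s ∧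
    nn P (lineOf z.1 z.2.2) ≤ nn P (lineOf z.1 z.2.1)) with hTp
  let sw : (ℝ×ℝ)×(ℝ×ℝ)×(ℝ×ℝ) → (ℝ×ℝ)×(ℝ×ℝ)×(ℝ×ℝ) := fun z => (z.1, z.2.2, z.2.1)
  have hsw : ∀ z ∈ T, sw z ∈ T := by
    intro z hz
    rw [hTm] at hz ⊢
    refine ⟨⟨hz.1.1, hz.1.2.2, hz.1.2.1⟩, hz.2.2.1, hz.2.1, ?_⟩
    have := hz.2.2.2
    unfold Perp at *
    simp only [sw]
    linarith
  have hcov : T ⊆ (Tr ∪ Tp) ∪ (Tr ∪ Tp).image sw := by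
    intro z hz
    have hz' := hsw z hz
    rw [Finset.mem_union]
    rcases le_total (nn P (lineOf z.1 z.2.2)) (nn P (lineOf z.1 z.2.1)) with h | h
    · left
      rw [Finset.mem_union]
      rcases lt_or_ge s (nn P (lineOf z.1 z.2.1)) with h' | h'
      · exact Or.inl (Finset.mem_filter.2 ⟨hz, h'⟩)
      · exact Or.inr (Finset.mem_filter.2 ⟨hz, h', h⟩)
    · right
      refine Finset.mem_image.2 ⟨sw z, ?_, rfl⟩
      rw [Finset.mem_union]
      rcases lt_or_ge s (nn P (lineOf z.1 z.2.2)) with h' | h'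
      · exact Or.inl (Finset.mem_filter.2 ⟨hz', h'⟩)
      · exact Or.inr (Finset.mem_filter.2 ⟨hz', h', h⟩)
  have hTcard : T.card ≤ 2 * (Tr.card + Tp.card) := by
    have h1 := Finset.card_le_card hcov
    have h2 := Finset.card_union_le (Tr ∪ Tp) ((Tr ∪ Tp).image sw)
    have h3 := Finset.card_image_le (s := Tr ∪ Tp) (f := sw)
    have h4 := Finset.card_union_le Tr Tp
    omega
  -- rich part
  have hTrc : Tr.card ≤ 3359238 * P.card * P.card := by
    have h1 : Tr.card ≤ (((P ×ˢ Lr).filter (fun e => OnL e.1 e.2)) ×ˢ P).card := by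
      apply Finset.card_le_card_of_injOn (fun z => ((z.2.1, lineOf z.1 z.2.1), z.2.2))
      · intro z hz
        have hz1 := Finset.mem_filter.1 hz
        have hz2 := (hTm z).1 hz1.1
        refine Finset.mem_product.2 ⟨Finset.mem_filter.2 ⟨Finset.mem_product.2
          ⟨hz2.1.2.1, Finset.mem_filter.2 ⟨hLLm _ hz2.1.1 _ hz2.1.2.1 hz2.2.1, hz1.2⟩⟩, ?_⟩, hz2.1.2.2⟩
        exact onL_right _ _ (hne _ hz2.1.1 _ hz2.1.2.1 hz2.2.1)
      · intro z hz y hy hzy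
        have hz2 := (hTm z).1 (Finset.mem_filter.1 hz).1
        have hy2 := (hTm y).1 (Finset.mem_filter.1 hy).1
        obtain ⟨a, c, d⟩ := z
        obtain ⟨a', c', d'⟩ := y
        simp only [Prod.mk.injEq] at hzy hz2 hy2
        obtain ⟨⟨rfl, hl⟩, rfl⟩ := hzy
        have n1 := hne _ hz2.1.1 _ hz2.1.2.1 hz2.2.1
        have n2 := hne _ hy2.1.1 _ hy2.1.2.1 hy2.2.1
        have o1 := onL_left a c
        have o2 := onL_right a c n1
        have o3 := onL_left a' c
        rw [← hl] at o3
        have p1 := hz2.2.2.2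
        have p2 := hy2.2.2.2
        unfold OnL at o1 o2 o3
        unfold Perp at p1 p2
        set k := lineOf a c
        have q1 : (d.1 - a.1) + k.1 * (d.2 - a.2) = 0 := by
          have : (c.1 - a.1) * ((d.1 - a.1) + k.1 * (d.2 - a.2)) = 0 := by
            have e : c.2 - a.2 = k.1 * (c.1 - a.1) := by rw [o1, o2]; ring
            rw [e] at p1; linarith
          rcases mul_eq_zero.1 this with h | h
          · exact absurd (by linarith) n1
          · exact h
        have q2 : (d.1 - a'.1) + k.1 * (d.2 - a'.2) = 0 := by
          have : (c.1 - a'.1) * ((d.1 - a'.1) + k.1 * (d.2 - a'.2)) = 0 := by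
            have e : c.2 - a'.2 = k.1 * (c.1 - a'.1) := by rw [o3, o2]; ring
            rw [e] at p2; linarith
          rcases mul_eq_zero.1 this with h | h
          · exact absurd (by linarith) n2
          · exact h
        have q3 : (a.1 - a'.1) * (1 + k.1^2) = 0 := by
          rw [o1] at q1; rw [o3] at q2; linarith
        have q4 : a.1 = a'.1 := by
          rcases mul_eq_zero.1 q3 with h | h
          · linarith
          · nlinarith [sq_nonneg k.1]
        have : a = a' := hP hz2.1.1 hy2.1.1 q4
        rw [this]
    rw [Finset.card_product, inc_eq_sum] at h1
    refine h1.trans ?_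
    gcongr
    apply rich_sum P Lr hP
    · intro l hl; exact hLL2 l (Finset.mem_filter.1 hl).1
    · intro l hl; exact (Finset.mem_filter.1 hl).2
  -- poor part
  have hTpc : Tp.card ≤ ∑ l ∈ Lp, (nn P l)^3 := by
    rw [Finset.card_eq_sum_card_fiberwise (f := fun z => lineOf z.1 z.2.1) (t := Lp)]
    · apply Finset.sum_le_sum
      intro l hl
      set Tl := Tp.filter (fun z => lineOf z.1 z.2.1 = l) with hTl
      set Q := P.filter (fun p => OnL p l) with hQ
      have hQc : Q.card = nn P l := by rw [hQ]; unfold nn; rfl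
      have hTlm : ∀ z ∈ Tl, z ∈ T ∧ lineOf z.1 z.2.1 = l ∧ nn P (lineOf z.1 z.2.2) ≤ nn P l := by
        intro z hz
        have h1 := Finset.mem_filter.1 hz
        have h2 := Finset.mem_filter.1 h1.1
        exact ⟨h2.1, h1.2, h1.2 ▸ h2.2.2⟩
      rw [Finset.card_eq_sum_card_fiberwise (f := fun z => (z.1, z.2.1)) (t := Q ×ˢ Q)]
      · calc _ ≤ ∑ _y ∈ Q ×ˢ Q, nn P l := by
              apply Finset.sum_le_sum
              rintro ⟨a, c⟩ -
              rcases Finset.eq_empty_or_nonempty (Tl.filter (fun z => (z.1, z.2.1) = (a, c))) with he | ⟨z0, hz0⟩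
              · rw [he]; simp
              · have g1 := Finset.mem_filter.1 hz0
                have g2 := hTlm _ g1.1
                have g3 := (hTm _).1 g2.1
                refine le_trans ?_ g2.2.2
                apply Finset.card_le_card_of_injOn (fun z => z.2.2)
                · intro z hz
                  have k1 := Finset.mem_filter.1 hz
                  have k2 := hTlm _ k1.1
                  have k3 := (hTm _).1 k2.1
                  refine Finset.mem_filter.2 ⟨k3.1.2.2, ?_⟩
                  obtain ⟨a0, c0, d0⟩ := z0
                  obtain ⟨a1, c1, d1⟩ := z
                  simp only [Prod.mk.injEq] at g1 k1 g3 k3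
                  obtain ⟨_, rfl, rfl⟩ := g1
                  obtain ⟨_, rfl, rfl⟩ := k1
                  have m1 := hne _ g3.1.1 _ g3.1.2.2 g3.2.2.1
                  have m2 := hne _ g3.1.1 _ g3.1.2.1 g3.2.1
                  have p1 := g3.2.2.2
                  have p2 := k3.2.2.2
                  unfold Perp at p1 p2
                  unfold OnL lineOf
                  simp only
                  have w1 : d0.1 - a1.1 ≠ 0 := fun h => m1 (by linarith)
                  have w2 : c1.1 - a1.1 ≠ 0 := fun h => m2 (by linarith)
                  have cr : (d1.2 - a1.2) * (d0.1 - a1.1) = (d0.2 - a1.2) * (d1.1 - a1.1) := by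
                    apply mul_left_cancel₀ w2
                    linear_combination (d1.2 - a1.2) * p1 - (d0.2 - a1.2) * p2
                  field_simp
                  linarith
                · intro z hz y hy hzy
                  have k1 := (Finset.mem_filter.1 hz).2
                  have k2 := (Finset.mem_filter.1 hy).2
                  simp only [Prod.mk.injEq] at k1 k2 hzy
                  exact Prod.ext (k1.1.trans k2.1.symm) (Prod.ext (k1.2.trans k2.2.symm) hzy)
          _ = _ := by
              rw [Finset.sum_const, Finset.card_product, hQc, smul_eq_mul]; ring
      · intro z hz
        have h1 := hTlm z hz
        have h2 := (hTm z).1 h1.1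
        refine Finset.mem_product.2 ⟨Finset.mem_filter.2 ⟨h2.1.1, ?_⟩, Finset.mem_filter.2 ⟨h2.1.2.1, ?_⟩⟩
        · rw [← h1.2.1]; exact onL_left _ _
        · rw [← h1.2.1]; exact onL_right _ _ (hne _ h2.1.1 _ h2.1.2.1 h2.2.1)
    · intro z hz
      have h1 := Finset.mem_filter.1 hz
      have h2 := (hTm z).1 h1.1
      exact Finset.mem_filter.2 ⟨hLLm _ h2.1.1 _ h2.1.2.1 h2.2.1, h1.2.1⟩
  have hpoor := poor_sum P Lp hP (fun l hl => hLL2 l (Finset.mem_filter.1 hl).1)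
    (fun l hl => (Finset.mem_filter.1 hl).2)
  have e1 : (T.card : ℝ) ≤ 2 * (Tr.card + Tp.card) := by exact_mod_cast hTcard
  have e2 : (Tr.card : ℝ) ≤ 3359238 * P.card * P.card := by exact_mod_cast hTrc
  have e3 : (Tp.card : ℝ) ≤ ((∑ l ∈ Lp, (nn P l)^3 : ℕ) : ℝ) := by exact_mod_cast hTpc
  have e4 : 0 ≤ Real.log P.card := Real.log_natCast_nonneg _
  have e5 : 0 ≤ (P.card:ℝ)^2 * Real.log P.card := by positivity
  have e6 : 0 ≤ (P.card:ℝ)^2 := by positivity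
  nlinarith

open Classical in
lemma tri_gen (P : Finset (ℝ×ℝ)) :
    (((P ×ˢ P ×ˢ P).filter (fun z => z.1 ≠ z.2.1 ∧ z.1 ≠ z.2.2 ∧ Perp z.1 z.2.1 z.2.2)).card : ℝ)
      ≤ 10^7 * (P.card:ℝ)^2 * (1 + Real.log P.card) := by
  obtain ⟨t, ht⟩ := Infinite.exists_notMem_finset
    (P.offDiag.image (fun z => -(z.1.1 - z.2.1)/(z.1.2-z.2.2)))
  let φ : ℝ×ℝ → ℝ×ℝ := fun p => (p.1 + t * p.2, p.2 - t * p.1)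
  have hfst : ∀ p ∈ P, ∀ q ∈ P, (φ p).1 = (φ q).1 → p = q := by
    intro p hp q hq h
    by_contra hne
    simp only [φ] at h
    by_cases h2 : p.2 - q.2 = 0
    · apply hne
      have h3 : p.2 = q.2 := by linarith
      rw [h3] at h
      exact Prod.ext (by linarith) h3
    · apply ht
      refine Finset.mem_image.2 ⟨(p, q), Finset.mem_offDiag.2 ⟨hp, hq, hne⟩, ?_⟩
      simp only
      rw [div_eq_iff h2]
      linarith
  have hφ : Set.InjOn φ (P : Set (ℝ×ℝ)) := fun p hp q hq h => hfst p hp q hq (by rw [h])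
  have hcard : (P.image φ).card = P.card := Finset.card_image_of_injOn hφ
  have main := tri_inj (P.image φ) (by
    intro x hx y hy hxy
    obtain ⟨p, hp, rfl⟩ := Finset.mem_image.1 hx
    obtain ⟨q, hq, rfl⟩ := Finset.mem_image.1 hy
    rw [hfst p hp q hq hxy])
  rw [hcard] at main
  refine le_trans ?_ main
  norm_cast
  apply Finset.card_le_card_of_injOn (fun z => (φ z.1, φ z.2.1, φ z.2.2))
  · intro z hz
    have h1 := Finset.mem_filter.1 hz
    have h2 := h1.1
    rw [Finset.mem_product, Finset.mem_product] at h2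
    refine Finset.mem_filter.2 ⟨?_, ?_, ?_, ?_⟩
    · rw [Finset.mem_product, Finset.mem_product]
      exact ⟨Finset.mem_image_of_mem _ h2.1, Finset.mem_image_of_mem _ h2.2.1,
        Finset.mem_image_of_mem _ h2.2.2⟩
    · exact fun h => h1.2.1 (hφ h2.1 h2.2.1 h)
    · exact fun h => h1.2.2.1 (hφ h2.1 h2.2.2 h)
    · have := h1.2.2.2
      unfold Perp at *
      simp only [φ]
      linear_combination (1+t^2) * this
  · intro z hz y hy hzy
    have h1 := (Finset.mem_filter.1 hz).1
    have h2 := (Finset.mem_filter.1 hy).1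
    rw [Finset.mem_product, Finset.mem_product] at h1 h2
    simp only [Prod.mk.injEq] at hzy
    exact Prod.ext (hφ h1.1 h2.1 hzy.1) (Prod.ext (hφ h1.2.1 h2.2.1 hzy.2.1)
      (hφ h1.2.2 h2.2.2 hzy.2.2))

open Classical in
lemma perp_all (P : Finset (ℝ×ℝ)) :
    (((P ×ˢ P ×ˢ P).filter (fun z => Perp z.1 z.2.1 z.2.2)).card : ℝ)
      ≤ (10^7 + 2) * (P.card:ℝ)^2 * (1 + Real.log P.card) := by
  have h := tri_gen P
  set T := (P ×ˢ P ×ˢ P).filter (fun z => z.1 ≠ z.2.1 ∧ z.1 ≠ z.2.2 ∧ Perp z.1 z.2.1 z.2.2)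
  have hsub : (P ×ˢ P ×ˢ P).filter (fun z => Perp z.1 z.2.1 z.2.2) ⊆
      T ∪ ((P ×ˢ P).image (fun z => (z.1, z.1, z.2)) ∪ (P ×ˢ P).image (fun z => (z.1, z.2, z.1))) := by
    intro z hz
    have h1 := Finset.mem_filter.1 hz
    have h2 := h1.1
    rw [Finset.mem_product, Finset.mem_product] at h2
    rw [Finset.mem_union, Finset.mem_union]
    by_cases ha : z.1 = z.2.1
    · right; left
      exact Finset.mem_image.2 ⟨(z.1, z.2.2), Finset.mem_product.2 ⟨h2.1, h2.2.2⟩,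
        Prod.ext rfl (Prod.ext ha rfl)⟩
    · by_cases hb : z.1 = z.2.2
      · right; right
        exact Finset.mem_image.2 ⟨(z.1, z.2.1), Finset.mem_product.2 ⟨h2.1, h2.2.1⟩,
          Prod.ext rfl (Prod.ext rfl hb)⟩
      · left
        exact Finset.mem_filter.2 ⟨h1.1, ha, hb, h1.2⟩
  have h1 := Finset.card_le_card hsub
  have h2 := Finset.card_union_le T ((P ×ˢ P).image (fun z => (z.1, z.1, z.2)) ∪ (P ×ˢ P).image (fun z => (z.1, z.2, z.1)))
  have h3 := Finset.card_union_le ((P ×ˢ P).image (fun z => (z.1, z.1, z.2))) ((P ×ˢ P).image (fun z => (z.1, z.2, z.1)))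
  have h4 := Finset.card_image_le (s := P ×ˢ P) (f := (fun z => (z.1, z.1, z.2)))
  have h5 := Finset.card_image_le (s := P ×ˢ P) (f := (fun z => (z.1, z.2, z.1)))
  rw [Finset.card_product] at h4 h5
  have h6 : ((P ×ˢ P ×ˢ P).filter (fun z => Perp z.1 z.2.1 z.2.2)).card ≤ T.card + 2 * (P.card * P.card) := by
    omega
  have h7 : (((P ×ˢ P ×ˢ P).filter (fun z => Perp z.1 z.2.1 z.2.2)).card : ℝ) ≤
      T.card + 2 * (P.card * P.card) := by exact_mod_cast h6
  have e4 : 0 ≤ Real.log P.card := Real.log_natCast_nonneg _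
  have e5 : 0 ≤ (P.card:ℝ)^2 * Real.log P.card := by positivity
  nlinarith

lemma energy_le (Λ : Set (EuclideanSpace ℝ (Fin 3))) (hΛ : Λ.Finite) (hsub : Λ ⊆ parab2) :
    (energy 2 Λ : ℝ) ≤ (10^7 + 2) * (Λ.ncard:ℝ)^2 * (1 + Real.log Λ.ncard) := by
  classical
  let pj : EuclideanSpace ℝ (Fin 3) → ℝ×ℝ := fun x => (x 0, x 1)
  have hpj : ∀ x ∈ Λ, ∀ y ∈ Λ, pj x = pj y → x = y := by
    intro x hx y hy h
    simp only [pj, Prod.mk.injEq] at h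
    have h1 := (hsub hx).2.2
    have h2 := (hsub hy).2.2
    ext i
    fin_cases i
    · exact h.1
    · exact h.2
    · show x 2 = y 2
      rw [h1, h2, h.1, h.2]
  set P := hΛ.toFinset.image pj with hP
  have hPc : P.card = Λ.ncard := by
    rw [hP, Finset.card_image_of_injOn, Set.ncard_eq_toFinset_card Λ hΛ]
    intro x hx y hy h
    exact hpj x (by simpa using hx) y (by simpa using hy) h
  have hmem : ∀ x ∈ Λ, pj x ∈ P := fun x hx => Finset.mem_image_of_mem _ (by simpa using hx)
  have h := perp_all P
  rw [hPc] at h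
  refine le_trans ?_ h
  norm_cast
  unfold energy
  set F := (P ×ˢ P ×ˢ P).filter (fun z => Perp z.1 z.2.1 z.2.2)
  have : F.card = Nat.card F := by simp
  rw [this]
  refine Nat.card_le_card_of_injective (fun fg => (⟨(pj (fg.1.1 0), pj (fg.1.2 0), pj (fg.1.2 1)), ?_⟩ : F)) ?_
  · obtain ⟨⟨f, g⟩, hf, hg, hs⟩ := fg
    refine Finset.mem_filter.2 ⟨?_, ?_⟩
    · rw [Finset.mem_product, Finset.mem_product]
      exact ⟨hmem _ (hf 0), hmem _ (hg 0), hmem _ (hg 1)⟩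
    · simp only [Fin.sum_univ_two] at hs
      have s0 : f 0 0 + f 1 0 = g 0 0 + g 1 0 := by
        simpa using congrArg (fun v : EuclideanSpace ℝ (Fin 3) => v 0) hs
      have s1 : f 0 1 + f 1 1 = g 0 1 + g 1 1 := by
        simpa using congrArg (fun v : EuclideanSpace ℝ (Fin 3) => v 1) hs
      have s2 : f 0 2 + f 1 2 = g 0 2 + g 1 2 := by
        simpa using congrArg (fun v : EuclideanSpace ℝ (Fin 3) => v 2) hs
      have a1 := (hsub (hf 0)).2.2
      have a2 := (hsub (hf 1)).2.2
      have a3 := (hsub (hg 0)).2.2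
      have a4 := (hsub (hg 1)).2.2
      simp only at a1 a2 a3 a4
      rw [a1, a2, a3, a4] at s2
      have b0 : f 1 0 = g 0 0 + g 1 0 - f 0 0 := by linarith
      have b1 : f 1 1 = g 0 1 + g 1 1 - f 0 1 := by linarith
      rw [b0, b1] at s2
      unfold Perp
      simp only [pj]
      linarith
  · rintro ⟨⟨f, g⟩, hf, hg, hs⟩ ⟨⟨f', g'⟩, hf', hg', hs'⟩ h
    simp only [Subtype.mk.injEq, Prod.mk.injEq] at h
    have e1 := hpj _ (hf 0) _ (hf' 0) h.1
    have e2 := hpj _ (hg 0) _ (hg' 0) h.2.1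
    have e3 := hpj _ (hg 1) _ (hg' 1) h.2.2
    simp only [Fin.sum_univ_two] at hs hs' e1 e2 e3
    have e4 : f 1 = f' 1 := by
      rw [e1, e2, e3, ← hs'] at hs
      exact add_left_cancel hs
    have ef : f = f' := by
      funext i; fin_cases i
      · exact e1
      · exact e4
    have eg : g = g' := by
      funext i; fin_cases i
      · exact e2
      · exact e3
    subst ef; subst eg; rfl

theorem additive_energy_P2 :
    ∀ ε > (0 : ℝ), ∃ C > (0 : ℝ),
      ∀ Λ : Set (EuclideanSpace ℝ (Fin 3)), Λ.Finite → Λ ⊆ parab2 →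
        (energy 2 Λ : ℝ) ≤ C * (Λ.ncard : ℝ) ^ ((2 : ℝ) + ε) := by
  intro ε hε
  refine ⟨(10^7+2) * (1 + 1/ε), by positivity, ?_⟩
  intro Λ hΛ hsub
  refine (energy_le Λ hΛ hsub).trans ?_
  rcases Nat.eq_zero_or_pos Λ.ncard with h0 | h0
  · rw [h0]
    have : (0:ℝ) ≤ ((0:ℕ):ℝ) ^ ((2:ℝ)+ε) := by positivity
    simp only [Nat.cast_zero] at *
    norm_num
    positivity
  · have hN : (1:ℝ) ≤ (Λ.ncard:ℝ) := by exact_mod_cast h0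
    set N : ℝ := (Λ.ncard:ℝ)
    have h1 : Real.log N ≤ N^ε/ε := Real.log_le_rpow_div (by linarith) hε
    have h2 : 1 ≤ N^ε := Real.one_le_rpow hN hε.le
    rw [Real.rpow_add (by linarith), Real.rpow_two]
    calc (10^7+2) * N^2 * (1 + Real.log N) ≤ (10^7+2) * N^2 * (N^ε + N^ε/ε) := by gcongr
      _ = _ := by ring

end
end

section
/- For every ε > 0 there is a constant C_ε such that every finite set Λ ⊂ P¹ = {(t, t²) : |t| ≤ 1/2} ⊂ ℝ² satisfies E₃(Λ) ≤ C_ε · |Λ|^{7/2+ε}. -/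
open MeasureTheory Real

noncomputable section

/-- The truncated parabola `P¹ ⊂ ℝ²`. -/
def parab1 : Set (ℝ × ℝ) := {p | |p.1| ≤ 1 / 2 ∧ p.2 = p.1 ^ 2}

/-- Cauchy-Schwarz: restricting coincidences to a common class. -/
lemma aep_cs {α β γ : Type*} [DecidableEq α] [DecidableEq β] [DecidableEq γ]
    (T : Finset α) (φ : α → β) (c : α → γ) (G : Finset γ) (hc : ∀ p ∈ T, c p ∈ G) :
    ((T ×ˢ T).filter (fun r => φ r.1 = φ r.2)).card ≤
      G.card * ((T ×ˢ T).filter (fun r => φ r.1 = φ r.2 ∧ c r.1 = c r.2)).card := by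
  have h1 : ((T ×ˢ T).filter (fun r => φ r.1 = φ r.2)).card =
      ∑ b ∈ T.image φ, (T.filter (fun p => φ p = b)).card ^ 2 := by
    rw [Finset.card_eq_sum_card_fiberwise (f := fun r => φ r.1) (t := T.image φ)]
    · refine Finset.sum_congr rfl fun b _ => ?_
      rw [sq, ← Finset.card_product]
      congr 1
      ext ⟨p, q⟩
      simp only [Finset.mem_filter, Finset.mem_product]
      grind
    · intro r hr
      simp only [Finset.coe_filter, Finset.mem_product, Set.mem_ofPred_eq] at hr
      exact Finset.mem_coe.2 (Finset.mem_image_of_mem φ hr.1.1)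
  have h2 : ((T ×ˢ T).filter (fun r => φ r.1 = φ r.2 ∧ c r.1 = c r.2)).card =
      ∑ b ∈ T.image φ, ∑ g ∈ G, (T.filter (fun p => φ p = b ∧ c p = g)).card ^ 2 := by
    rw [← Finset.sum_product',
      Finset.card_eq_sum_card_fiberwise (f := fun r => (φ r.1, c r.1)) (t := T.image φ ×ˢ G)]
    · refine Finset.sum_congr rfl fun b _ => ?_
      rw [sq, ← Finset.card_product]
      congr 1
      ext ⟨p, q⟩
      obtain ⟨b, g⟩ := b
      simp only [Finset.mem_filter, Finset.mem_product, Prod.mk.injEq]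
      grind
    · intro r hr
      simp only [Finset.coe_filter, Finset.mem_product, Set.mem_ofPred_eq] at hr
      exact Finset.mem_coe.2 (Finset.mem_product.2
        ⟨Finset.mem_image_of_mem φ hr.1.1, hc _ hr.1.1⟩)
  rw [h1, h2, Finset.mul_sum]
  refine Finset.sum_le_sum fun b _ => ?_
  have h3 : (T.filter (fun p => φ p = b)).card =
      ∑ g ∈ G, (T.filter (fun p => φ p = b ∧ c p = g)).card := by
    rw [Finset.card_eq_sum_card_fiberwise (f := c) (t := G)]
    · simp only [Finset.filter_filter]
    · intro p hp
      simp only [Finset.coe_filter, Set.mem_ofPred_eq] at hp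
      exact hc _ hp.1
  rw [h3]
  exact sq_sum_le_card_mul_sum_sq

/-- On sorted solutions the largest entry increases with the smallest one. -/
lemma aep_mono {x y z x' y' z' : ℝ} (h2 : y ≤ z) (h1' : x' ≤ y') (h2' : y' ≤ z')
    (hs : x + y + z = x' + y' + z') (hq : x ^ 2 + y ^ 2 + z ^ 2 = x' ^ 2 + y' ^ 2 + z' ^ 2)
    (hx : x < x') : z < z' := by
  by_contra! h
  obtain ⟨d, rfl⟩ : ∃ d, x = x' - d := ⟨x' - x, by ring⟩
  obtain ⟨e, rfl⟩ : ∃ e, z = z' + e := ⟨z - z', by ring⟩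
  obtain rfl : y = y' + d - e := by linarith
  have hd : 0 < d := by linarith
  have he : 0 ≤ e := by linarith
  nlinarith [mul_nonneg he (sub_nonneg.2 h2'), mul_nonneg hd.le (sub_nonneg.2 h1'),
    sq_nonneg (d - e), sq_nonneg e, mul_pos hd hd]

lemma aep_eq {x y z y' z' : ℝ} (h2 : y ≤ z) (h2' : y' ≤ z')
    (hs : x + y + z = x + y' + z') (hq : x ^ 2 + y ^ 2 + z ^ 2 = x ^ 2 + y' ^ 2 + z' ^ 2) :
    z = z' := by
  obtain ⟨e, rfl⟩ : ∃ e, z = z' + e := ⟨z - z', by ring⟩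
  obtain rfl : y = y' - e := by linarith
  have h : e * (z' - y' + e) = 0 := by nlinarith
  rcases mul_eq_zero.1 h with h | h
  · simp [h]
  · linarith

/-- The rank of an element in a finite set. -/
def aepRank (A : Finset ℝ) (x : ℝ) : ℕ := (A.filter (fun a => a < x)).card

lemma aepRank_mono (A : Finset ℝ) : Monotone (aepRank A) := by
  intro x y h
  apply Finset.card_le_card
  intro a
  simp only [Finset.mem_filter]
  rintro ⟨h1, h2⟩
  exact ⟨h1, h2.trans_le h⟩

lemma aepRank_lt (A : Finset ℝ) {x y : ℝ} (hx : x ∈ A) (h : x < y) :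
    aepRank A x < aepRank A y := by
  apply Finset.card_lt_card
  rw [Finset.ssubset_iff_of_subset]
  · exact ⟨x, by simp [hx, h], by simp⟩
  · intro a
    simp only [Finset.mem_filter]
    rintro ⟨h1, h2⟩
    exact ⟨h1, h2.trans h⟩

lemma aepRank_inj (A : Finset ℝ) : Set.InjOn (aepRank A) A := by
  intro x hx y hy h
  rcases lt_trichotomy x y with h1 | h1 | h1
  · exact absurd h (aepRank_lt A hx h1).ne
  · exact h1
  · exact absurd h (aepRank_lt A hy h1).ne'

/-- The set of pairs in a common block. -/
def aepPairs (A : Finset ℝ) (w : ℕ) : Finset (ℝ × ℝ) :=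
  (A ×ˢ A).filter (fun r => aepRank A r.1 / w = aepRank A r.2 / w)

lemma aepPairs_card (A : Finset ℝ) (w : ℕ) (hw : 0 < w) :
    (aepPairs A w).card ≤ A.card * w := by
  have : (aepPairs A w).card ≤ (A ×ˢ Finset.range w).card := by
    apply Finset.card_le_card_of_injOn (fun r => (r.1, aepRank A r.2 % w))
    · intro r hr
      simp only [aepPairs, Finset.coe_filter, Finset.mem_product, Set.mem_ofPred_eq] at hr
      simp [hr.1.1, Nat.mod_lt _ hw]
    · rintro ⟨x, y⟩ hr ⟨x', y'⟩ hr' h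
      simp only [aepPairs, Finset.coe_filter, Finset.mem_product, Set.mem_ofPred_eq] at hr hr'
      simp only [Prod.mk.injEq] at h ⊢
      obtain ⟨rfl, h⟩ := h
      refine ⟨rfl, aepRank_inj A hr.1.2 hr'.1.2 ?_⟩
      rw [← Nat.div_add_mod (aepRank A y) w, ← Nat.div_add_mod (aepRank A y') w, h, ← hr.2,
        ← hr'.2]
  simpa using this

/-- The sum and the sum of squares. -/
def aepPhi (p : Fin 3 → ℝ) : ℝ × ℝ := (∑ i, p i, ∑ i, p i ^ 2)

/-- Order type together with the total block index of the extreme entries. -/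
def aepClass (A : Finset ℝ) (w : ℕ) (p : Fin 3 → ℝ) : Equiv.Perm (Fin 3) × ℕ :=
  (Tuple.sort p, aepRank A (p (Tuple.sort p 0)) / w + aepRank A (p (Tuple.sort p 2)) / w)

lemma aepPhi_sort (p : Fin 3 → ℝ) (σ : Equiv.Perm (Fin 3)) :
    aepPhi p = (p (σ 0) + p (σ 1) + p (σ 2), p (σ 0) ^ 2 + p (σ 1) ^ 2 + p (σ 2) ^ 2) := by
  unfold aepPhi
  rw [← Equiv.sum_comp σ p, ← Equiv.sum_comp σ (fun i => p i ^ 2), Fin.sum_univ_three,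
    Fin.sum_univ_three]

lemma aep_ext (p q : Fin 3 → ℝ) (σ : Equiv.Perm (Fin 3)) (h0 : p (σ 0) = q (σ 0))
    (h1 : p (σ 1) = q (σ 1)) (h2 : p (σ 2) = q (σ 2)) : p = q := by
  ext i
  obtain ⟨j, rfl⟩ := σ.surjective i
  fin_cases j <;> assumption

/-- Two distinct solutions of the same order type are strictly ordered at both extremes. -/
lemma aep_chain {p q : Fin 3 → ℝ} (hne : p ≠ q) (hφ : aepPhi p = aepPhi q)
    (hσ : Tuple.sort p = Tuple.sort q) :
    (p (Tuple.sort p 0) < q (Tuple.sort p 0) ∧ p (Tuple.sort p 2) < q (Tuple.sort p 2)) ∨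
    (q (Tuple.sort p 0) < p (Tuple.sort p 0) ∧ q (Tuple.sort p 2) < p (Tuple.sort p 2)) := by
  have mp := Tuple.monotone_sort p
  have mq := Tuple.monotone_sort q
  rw [← hσ] at mq
  set σ := Tuple.sort p
  rw [aepPhi_sort p σ, aepPhi_sort q σ] at hφ
  simp only [Prod.mk.injEq] at hφ
  obtain ⟨hs, hq⟩ := hφ
  have p1 : p (σ 0) ≤ p (σ 1) := mp (by decide : (0 : Fin 3) ≤ 1)
  have p2 : p (σ 1) ≤ p (σ 2) := mp (by decide : (1 : Fin 3) ≤ 2)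
  have q1 : q (σ 0) ≤ q (σ 1) := mq (by decide : (0 : Fin 3) ≤ 1)
  have q2 : q (σ 1) ≤ q (σ 2) := mq (by decide : (1 : Fin 3) ≤ 2)
  rcases lt_trichotomy (p (σ 0)) (q (σ 0)) with h | h | h
  · exact Or.inl ⟨h, aep_mono p2 q1 q2 hs hq h⟩
  · exfalso
    rw [h] at hs hq
    have h2 := aep_eq p2 q2 hs hq
    exact hne (aep_ext p q σ h (by linarith) h2)
  · exact Or.inr ⟨h, aep_mono q2 p1 p2 hs.symm hq.symm h⟩

lemma aep_offdiag (A : Finset ℝ) (w : ℕ) (hw : 0 < w) :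
    (((Fintype.piFinset (fun _ : Fin 3 => A) ×ˢ Fintype.piFinset (fun _ : Fin 3 => A)).filter
      (fun r => aepPhi r.1 = aepPhi r.2 ∧ aepClass A w r.1 = aepClass A w r.2)).filter
        (fun r => r.1 ≠ r.2)).card ≤ 6 * ((A.card * w) * (A.card * w)) := by
  have h6 : (Finset.univ : Finset (Equiv.Perm (Fin 3))).card = 6 := by
    rw [Finset.card_univ, Fintype.card_perm]; rfl
  have key : (((Fintype.piFinset (fun _ : Fin 3 => A) ×ˢ
      Fintype.piFinset (fun _ : Fin 3 => A)).filter
      (fun r => aepPhi r.1 = aepPhi r.2 ∧ aepClass A w r.1 = aepClass A w r.2)).filter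
        (fun r => r.1 ≠ r.2)).card ≤
      ((Finset.univ : Finset (Equiv.Perm (Fin 3))) ×ˢ (aepPairs A w ×ˢ aepPairs A w)).card := by
    apply Finset.card_le_card_of_injOn (fun r => (Tuple.sort r.1,
      ((r.1 (Tuple.sort r.1 0), r.2 (Tuple.sort r.1 0)),
       (r.1 (Tuple.sort r.1 2), r.2 (Tuple.sort r.1 2)))))
    · rintro ⟨p, q⟩ hr
      simp only [Finset.coe_filter, Finset.mem_filter, Finset.mem_product, Set.mem_ofPred_eq,
        Fintype.mem_piFinset, aepClass, Prod.mk.injEq] at hr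
      obtain ⟨⟨⟨hp, hq⟩, hφ, hσ, hc⟩, hne⟩ := hr
      have hch := aep_chain hne hφ hσ
      rw [← hσ] at hc
      simp only [Finset.coe_product, Set.mem_prod, Finset.mem_coe, Finset.mem_univ, true_and,
        aepPairs, Finset.mem_filter, Finset.mem_product, hp, hq]
      rcases hch with ⟨a, b⟩ | ⟨a, b⟩
      · have := Nat.div_le_div_right (c := w) (aepRank_mono A a.le)
        have := Nat.div_le_div_right (c := w) (aepRank_mono A b.le)
        omega
      · have := Nat.div_le_div_right (c := w) (aepRank_mono A a.le)
        have := Nat.div_le_div_right (c := w) (aepRank_mono A b.le)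
        omega
    · rintro ⟨p, q⟩ hr ⟨p', q'⟩ hr' h
      simp only [Finset.coe_filter, Finset.mem_filter, Finset.mem_product, Set.mem_ofPred_eq,
        Fintype.mem_piFinset, aepClass, Prod.mk.injEq] at hr hr' h
      obtain ⟨⟨-, hφ, hσ, -⟩, hne⟩ := hr
      obtain ⟨⟨-, hφ', hσ', -⟩, hne'⟩ := hr'
      obtain ⟨hs, ⟨e1, e2⟩, e3, e4⟩ := h
      have hch := aep_chain hne hφ hσ
      rw [← hs] at e1 e2 e3 e4
      set σ := Tuple.sort p
      rw [aepPhi_sort p σ, aepPhi_sort q σ] at hφ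
      rw [aepPhi_sort p' σ, aepPhi_sort q' σ] at hφ'
      simp only [Prod.mk.injEq] at hφ hφ'
      obtain ⟨a1, a2⟩ := hφ
      obtain ⟨b1, b2⟩ := hφ'
      rw [← e1, ← e2, ← e3, ← e4] at b1 b2
      have hD : p (σ 1) - q (σ 1) ≠ 0 := by
        rcases hch with ⟨a, b⟩ | ⟨a, b⟩
        · intro h0; linarith
        · intro h0; linarith
      have hd : p' (σ 1) - q' (σ 1) = p (σ 1) - q (σ 1) := by linarith
      have hprod : (p (σ 1) - q (σ 1)) * (p (σ 1) + q (σ 1)) =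
          (p (σ 1) - q (σ 1)) * (p' (σ 1) + q' (σ 1)) := by
        rw [← hd]
        nth_rewrite 1 [hd]
        linarith
      have hsum := mul_left_cancel₀ hD hprod
      simp only [Prod.mk.injEq]
      exact ⟨aep_ext p p' σ e1 (by linarith) e3, aep_ext q q' σ e2 (by linarith) e4⟩
  refine key.trans ?_
  rw [Finset.card_product, Finset.card_product, h6]
  have := aepPairs_card A w hw
  gcongr

lemma aep_main (A : Finset ℝ) (w : ℕ) (hw : 0 < w) :
    ((Fintype.piFinset (fun _ : Fin 3 => A) ×ˢ Fintype.piFinset (fun _ : Fin 3 => A)).filter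
      (fun r => aepPhi r.1 = aepPhi r.2)).card ≤
    (6 * (2 * (A.card / w) + 1)) * (A.card ^ 3 + 6 * ((A.card * w) * (A.card * w))) := by
  have h6 : (Finset.univ : Finset (Equiv.Perm (Fin 3))).card = 6 := by
    rw [Finset.card_univ, Fintype.card_perm]; rfl
  have h := aep_cs (Fintype.piFinset (fun _ : Fin 3 => A)) aepPhi (aepClass A w)
    (Finset.univ ×ˢ Finset.range (2 * (A.card / w) + 1)) (by
      intro p hp
      simp only [aepClass, Finset.mem_product, Finset.mem_univ, true_and, Finset.mem_range]
      have hr : ∀ x, aepRank A x / w ≤ A.card / w := fun x =>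
        Nat.div_le_div_right (Finset.card_filter_le _ _)
      have := hr (p (Tuple.sort p 0))
      have := hr (p (Tuple.sort p 2))
      omega)
  refine h.trans ?_
  rw [Finset.card_product, h6, Finset.card_range]
  gcongr
  rw [← Finset.card_filter_add_card_filter_not (fun r : (Fin 3 → ℝ) × (Fin 3 → ℝ) => r.1 = r.2)]
  refine Nat.add_le_add ?_ (aep_offdiag A w hw)
  have : A.card ^ 3 = (Fintype.piFinset (fun _ : Fin 3 => A)).card := by
    simp [Fintype.card_piFinset]
  rw [this]
  apply Finset.card_le_card_of_injOn (fun r => r.1)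
  · intro r hr
    simp only [Finset.coe_filter, Finset.mem_filter, Finset.mem_product, Set.mem_ofPred_eq] at hr
    exact hr.1.1.1
  · rintro ⟨p, q⟩ hr ⟨p', q'⟩ hr' h
    simp only [Finset.coe_filter, Finset.mem_filter, Set.mem_ofPred_eq] at hr hr' h
    simp only [Prod.mk.injEq]
    exact ⟨h, by rw [← hr.2, ← hr'.2, h]⟩

lemma aep_energy_le (Λ : Set (ℝ × ℝ)) (hP : Λ ⊆ parab1) (A : Finset ℝ)
    (hA : ∀ v ∈ Λ, v.1 ∈ A) :
    energy 3 Λ ≤ ((Fintype.piFinset (fun _ : Fin 3 => A) ×ˢ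
      Fintype.piFinset (fun _ : Fin 3 => A)).filter (fun r => aepPhi r.1 = aepPhi r.2)).card := by
  unfold energy
  rw [← Fintype.card_coe, ← Nat.card_eq_fintype_card]
  refine Nat.card_le_card_of_injective (fun fg => ⟨(fun i => (fg.1.1 i).1, fun i => (fg.1.2 i).1),
    ?_⟩) ?_
  · obtain ⟨⟨f, g⟩, h1, h2, h3⟩ := fg
    simp only [Finset.mem_filter, Finset.mem_product, Fintype.mem_piFinset]
    refine ⟨⟨fun i => hA _ (h1 i), fun i => hA _ (h2 i)⟩, ?_⟩
    simp only at h1 h2 h3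
    have e1 : ∑ i, (f i).1 = ∑ i, (g i).1 := by
      rw [← Prod.fst_sum, ← Prod.fst_sum, h3]
    have e2 : ∑ i, (f i).1 ^ 2 = ∑ i, (g i).1 ^ 2 := by
      have a : ∀ i, (f i).1 ^ 2 = (f i).2 := fun i => ((hP (h1 i)).2).symm
      have b : ∀ i, (g i).1 ^ 2 = (g i).2 := fun i => ((hP (h2 i)).2).symm
      simp only [a, b]
      rw [← Prod.snd_sum, ← Prod.snd_sum, h3]
    simp only [aepPhi, e1, e2]
  · rintro ⟨⟨f, g⟩, h1, h2, h3⟩ ⟨⟨f', g'⟩, h1', h2', h3'⟩ h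
    simp only [Subtype.mk.injEq, Prod.mk.injEq] at h ⊢
    simp only at h1 h2 h1' h2'
    have key : ∀ u v : ℝ × ℝ, u ∈ Λ → v ∈ Λ → u.1 = v.1 → u = v := by
      intro u v hu hv huv
      refine Prod.ext huv ?_
      rw [(hP hu).2, (hP hv).2, huv]
    exact ⟨funext fun i => key _ _ (h1 i) (h1' i) (congrFun h.1 i),
      funext fun i => key _ _ (h2 i) (h2' i) (congrFun h.2 i)⟩

lemma aep_final (N : ℕ) (hN : 0 < N) (E : ℕ)
    (h : ∀ w : ℕ, 0 < w → E ≤ (6 * (2 * (N / w) + 1)) * (N ^ 3 + 6 * ((N * w) * (N * w)))) :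
    (E : ℝ) ≤ 210 * (N : ℝ) ^ ((7 : ℝ) / 2) := by
  have hw : 0 < Nat.sqrt N := Nat.sqrt_pos.2 hN
  have h1 := h _ hw
  have hNR : (1 : ℝ) ≤ N := by exact_mod_cast hN
  set w := Nat.sqrt N with hwd
  have hww : w * w ≤ N := Nat.sqrt_le N
  have hlt : N < (w + 1) * (w + 1) := Nat.lt_succ_sqrt N
  set s := Real.sqrt N with hs
  have hs1 : 1 ≤ s := Real.one_le_sqrt.2 hNR
  have hss : s * s = N := Real.mul_self_sqrt (by positivity)
  have hwR : (1 : ℝ) ≤ w := by exact_mod_cast hw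
  have hltR : (N : ℝ) < (w + 1) * (w + 1) := by exact_mod_cast hlt
  have hwwR : (w : ℝ) * w ≤ N := by exact_mod_cast hww
  have hsw : s ≤ 2 * w := by
    by_contra! hc
    nlinarith
  have hdiv : ((N / w : ℕ) : ℝ) ≤ 2 * s := by
    refine Nat.cast_div_le.trans ?_
    rw [div_le_iff₀ (by linarith)]
    nlinarith
  have hpow : (N : ℝ) ^ ((7 : ℝ) / 2) = N ^ 3 * s := by
    rw [hs, Real.sqrt_eq_rpow, ← Real.rpow_natCast, ← Real.rpow_add (by linarith)]
    norm_num
  have h2 : (E : ℝ) ≤ (6 * (2 * ((N / w : ℕ) : ℝ) + 1)) *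
      ((N : ℝ) ^ 3 + 6 * ((N * w) * (N * w))) := by exact_mod_cast h1
  rw [hpow]
  have h3 : (6 * (2 * ((N / w : ℕ) : ℝ) + 1)) ≤ 30 * s := by linarith
  have h4 : (N : ℝ) ^ 3 + 6 * ((N * w) * (N * w)) ≤ 7 * N ^ 3 := by
    have : (N : ℝ) * N * (w * w) ≤ N * N * N := by gcongr
    nlinarith
  calc (E : ℝ) ≤ _ := h2
    _ ≤ (30 * s) * (7 * N ^ 3) := by gcongr
    _ = 210 * (N ^ 3 * s) := by ring

theorem additive_energy_parabola :
    ∀ ε > (0 : ℝ), ∃ C > (0 : ℝ),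
      ∀ Λ : Set (ℝ × ℝ), Λ.Finite → Λ ⊆ parab1 →
        (energy 3 Λ : ℝ) ≤ C * (Λ.ncard : ℝ) ^ ((7 : ℝ) / 2 + ε) := by
  intro ε hε
  refine ⟨210, by norm_num, fun Λ hf hP => ?_⟩
  classical
  set A : Finset ℝ := hf.toFinset.image Prod.fst with hA
  have hcard : A.card ≤ Λ.ncard := by
    rw [Set.ncard_eq_toFinset_card Λ hf]
    exact Finset.card_image_le
  have hE := aep_energy_le Λ hP A (fun v hv =>
    Finset.mem_image_of_mem _ (hf.mem_toFinset.2 hv))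
  rcases Nat.eq_zero_or_pos Λ.ncard with h0 | hN
  · have hA0 : A.card = 0 := by omega
    have h1 := hE.trans (aep_main A 1 one_pos)
    rw [hA0] at h1
    have h2 : energy 3 Λ = 0 := by simpa using h1
    rw [h2, Nat.cast_zero]
    positivity
  · have h1 := aep_final Λ.ncard hN (energy 3 Λ) (fun w hw => by
      refine (hE.trans (aep_main A w hw)).trans ?_
      have := Nat.div_le_div_right (c := w) hcard
      gcongr)
    refine h1.trans ?_
    have : (1 : ℝ) ≤ Λ.ncard := by exact_mod_cast hN
    gcongr
    · linarith

end
end
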